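/- arXiv:1812.09772 — 8 statements merged into one kernel-verified Lean document; each statement's English description precedes it below -/
import Mathlib

section
/- Let n ≥ 1 and let G be a group acting on ℝⁿ by homeomorphisms, such that the action is free (g • x = x for some x ∈ ℝⁿ implies g = 1) and properly discontinuous (for all compact sets K, L ⊆ ℝⁿ, the set {g ∈ G : (g • K) ∩ L ≠ ∅} is finite). If H is a subgroup of G such that the orbit space ℝⁿ/H, equipped with the quotient topology, is compact, then H has finite index in G. -/
/-! Since `ℝⁿ → ℝⁿ/H` is open and `ℝⁿ` is locally compact, a finite cover of the compact quotient
lifts to a compact set `K` meeting every `H`-orbit. Fix a point `x`. Each right coset `Hg` contains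
an element `hg` with `hg • x ∈ K`, and proper discontinuity leaves only finitely many such elements.
-/

open Set

theorem exists_isCompact_subset_image_of_isOpenMap {X Y : Type*} [TopologicalSpace X]
    [TopologicalSpace Y] [WeaklyLocallyCompactSpace X] {f : X → Y} (hf : IsOpenMap f) {K : Set Y}
    (hK : IsCompact K) (hKf : K ⊆ range f) : ∃ L : Set X, IsCompact L ∧ K ⊆ f '' L := by
  refine hK.induction_on (p := fun s => ∃ L : Set X, IsCompact L ∧ s ⊆ f '' L)
    ⟨∅, isCompact_empty, empty_subset _⟩ ?mono ?union ?nhds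
  case mono =>
    rintro s t hst ⟨L, hL, htL⟩
    exact ⟨L, hL, hst.trans htL⟩
  case union =>
    rintro s t ⟨L, hL, hsL⟩ ⟨M, hM, htM⟩
    exact ⟨L ∪ M, hL.union hM, image_union f L M ▸ union_subset_union hsL htM⟩
  case nhds =>
    intro y hy
    obtain ⟨x, rfl⟩ := hKf hy
    obtain ⟨L, hL, hLx⟩ := exists_compact_mem_nhds x
    exact ⟨f '' L, mem_nhdsWithin_of_mem_nhds (hf.image_mem_nhds hLx), L, hL, Subset.rfl⟩

theorem exists_isCompact_forall_exists_smul_mem (G X : Type*) [Group G] [MulAction G X]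
    [TopologicalSpace X] [WeaklyLocallyCompactSpace X] [ContinuousConstSMul G X]
    [CompactSpace (MulAction.orbitRel.Quotient G X)] :
    ∃ K : Set X, IsCompact K ∧ ∀ x : X, ∃ g : G, g • x ∈ K := by
  have hmk := MulAction.isOpenQuotientMap_quotientMk (Γ := G) (T := X)
  obtain ⟨K, hK, hcover⟩ := exists_isCompact_subset_image_of_isOpenMap hmk.isOpenMap
    isCompact_univ hmk.surjective.range_eq.ge
  refine ⟨K, hK, fun x => ?_⟩
  obtain ⟨y, hy, hyx⟩ := hcover (mem_univ (Quotient.mk _ x))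
  obtain ⟨g, rfl⟩ := MulAction.orbitRel_apply.mp (Quotient.exact hyx)
  exact ⟨g, hy⟩

section GroupAction

variable {G X : Type*} [Group G] [MulAction G X]

theorem finiteIndex_of_finite_setOf_smul_mem {H : Subgroup G} {s : Set X} {x : X}
    (hs : ∀ g : G, ∃ h : H, h • g • x ∈ s) (hfin : {g : G | g • x ∈ s}.Finite) :
    H.FiniteIndex := by
  have : Finite {g : G | g • x ∈ s} := hfin
  -- `G ⧸ H` consists of left cosets, so the right coset `Hg` is represented by `g⁻¹`.
  let toCoset : {g : G | g • x ∈ s} → G ⧸ H := fun g => ((g⁻¹ : G) : G ⧸ H)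
  have toCoset_surjective : Function.Surjective toCoset := by
    intro q
    obtain ⟨g, rfl⟩ := QuotientGroup.mk_surjective q
    obtain ⟨h, hh⟩ := hs g⁻¹
    refine ⟨⟨h * g⁻¹, by rwa [mem_ofPred_eq, mul_smul]⟩, QuotientGroup.eq.mpr ?_⟩
    simp
  exact Subgroup.finiteIndex_iff_finite_quotient.mpr (Finite.of_surjective _ toCoset_surjective)

theorem stmt_2_general [TopologicalSpace X] [WeaklyLocallyCompactSpace X] (H : Subgroup G)
    [ContinuousConstSMul H X] [CompactSpace (MulAction.orbitRel.Quotient H X)] (x : X)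
    (hx : ∀ K : Set X, IsCompact K → {g : G | g • x ∈ K}.Finite) : H.FiniteIndex := by
  obtain ⟨K, hK, hmeets⟩ := exists_isCompact_forall_exists_smul_mem H X
  exact finiteIndex_of_finite_setOf_smul_mem (fun g => hmeets (g • x)) (hx K hK)

end GroupAction

/-- for a free and properly discontinuous action of a group `G` on ℝⁿ by
homeomorphisms, any subgroup `H` with compact orbit space ℝⁿ/H has finite index in `G`. -/
theorem stmt_2 (n : ℕ) (hn : 1 ≤ n) (G : Type) [Group G] [MulAction G (Fin n → ℝ)]
    (hcont : ∀ g : G, Continuous fun x : Fin n → ℝ => g • x)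
    (hfree : ∀ (g : G) (x : Fin n → ℝ), g • x = x → g = 1)
    (hpd : ∀ K L : Set (Fin n → ℝ), IsCompact K → IsCompact L →
      {g : G | ((fun x => g • x) '' K ∩ L).Nonempty}.Finite)
    (H : Subgroup G)
    (hcomp : CompactSpace (Quotient (MulAction.orbitRel H (Fin n → ℝ)))) :
    H.FiniteIndex := by
  have : ContinuousConstSMul H (Fin n → ℝ) := ⟨fun h => hcont h⟩
  exact stmt_2_general H (0 : Fin n → ℝ) fun K hK => by simpa using hpd {0} K isCompact_singleton hK
end

section
/- Let g be the affine transformation of ℝ³ given by x ↦ A x + v, where A ∈ GL₃(ℤ), the characteristic polynomial of A is (t−1)³ (i.e., all eigenvalues of A equal 1), and v ∈ ℝ³. Then there exist P ∈ GL₃(ℤ) and c ∈ ℝ³ such that, letting h be the affine map x ↦ P x + c, the conjugate h ∘ g ∘ h⁻¹ is an affine map x ↦ A' x + v' of one of the following three forms: (i) A' = [[1,a,b],[0,1,c₀],[0,0,1]] with a, b, c₀ ∈ ℤ, a ≠ 0, c₀ ≠ 0, and v' = (0,0,z) for some z ∈ ℝ; (ii) A' = [[1,0,b],[0,1,0],[0,0,1]]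 with b ∈ ℤ, b ≠ 0, and v' = (0,y,z) for some y, z ∈ ℝ; (iii) A' is the identity matrix and v' ∈ ℝ³ is arbitrary. -/
/-!
The matrix `N = A - 1` is nilpotent. For a nilpotent endomorphism `f` of a finite free module over
a PID, the range is again free, so a basis of `ker f` followed by preimages of a basis of the range
is a basis of the whole module; inducting on the nilpotency index makes `f` strictly upper
triangular. In dimension three, if one of the two superdiagonal entries vanishes, then the
triangular form has a single nonzero row or column, which a Bézout relation reduces to an entry in
the corner. Moving the origin then removes the coordinates of the translation part that lie in the
image of `A' - 1`.
-/

open Matrix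

section Triangularization

lemma exists_equiv_ker_prod_range {R M N : Type*} [Ring R] [AddCommGroup M] [AddCommGroup N]
    [Module R M] [Module R N] (f : M →ₗ[R] N) [Module.Projective R (LinearMap.range f)] :
    ∃ e : M ≃ₗ[R] LinearMap.ker f × LinearMap.range f, ∀ x, ((e x).2 : N) = f x := by
  obtain ⟨s, hs⟩ := Module.projective_lifting_property f.rangeRestrict LinearMap.id
    f.surjective_rangeRestrict
  have hexact : Function.Exact (LinearMap.ker f).subtype f.rangeRestrict :=
    LinearMap.exact_iff.2 (by simp)
  obtain ⟨e, _, he⟩ :=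
    hexact.splitSurjectiveEquiv (LinearMap.ker f).injective_subtype ⟨s, hs⟩
  exact ⟨e, fun x ↦ congrArg Subtype.val (LinearMap.congr_fun he x).symm⟩

variable {R : Type*} [CommRing R] [IsDomain R] [IsPrincipalIdealRing R]

theorem exists_basis_repr_eq_zero_of_isNilpotent {M : Type*} [AddCommGroup M] [Module R M]
    [Module.Free R M] [Module.Finite R M] {f : Module.End R M} (hf : IsNilpotent f) :
    ∃ (n : ℕ) (b : Module.Basis (Fin n) R M), ∀ i j, j ≤ i → b.repr (f (b j)) i = 0 := by
  obtain ⟨k, hk⟩ := hf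
  induction k generalizing M with
  | zero =>
    have : Subsingleton M := subsingleton_of_forall_eq 0 fun x ↦ LinearMap.congr_fun hk x
    exact ⟨0, Module.Basis.empty M, fun i ↦ i.elim0⟩
  | succ k ih =>
    let g : Module.End R (LinearMap.range f) := f.restrict fun x _ ↦ LinearMap.mem_range_self f x
    have hg : g ^ k = 0 := by
      ext ⟨_, x, rfl⟩
      simpa [g, Module.End.pow_restrict (h := fun x _ ↦ LinearMap.mem_range_self f x), pow_succ]
        using LinearMap.congr_fun hk x
    obtain ⟨r, b, hb⟩ := ih hg
    let c := Module.finBasis R (LinearMap.ker f)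
    obtain ⟨e, he⟩ := exists_equiv_ker_prod_range f
    let B := (c.prod b).map e.symm
    have hB_inl (j) : f (B (.inl j)) = 0 := by simp [B, ← he]
    have hB_inr (j) : f (B (.inr j)) = b j := by simp [B, ← he]
    have hrepr (x : M) (i) : B.repr x (.inr i) = b.repr ⟨f x, x, rfl⟩ i := by
      have he_snd : (e x).2 = ⟨f x, x, rfl⟩ := Subtype.ext (he x)
      simp [B, he_snd]
    refine ⟨_, B.reindex finSumFinEquiv, fun i j hij ↦ ?_⟩
    obtain ⟨i, rfl⟩ := finSumFinEquiv.surjective i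
    obtain ⟨j, rfl⟩ := finSumFinEquiv.surjective j
    simp only [Module.Basis.reindex_apply, Module.Basis.repr_reindex_apply,
      Equiv.symm_apply_apply]
    rcases j with j | j
    · simp [hB_inl]
    rcases i with i | i
    · exact absurd hij (Fin.not_le.2 (i.is_lt.trans_le (Nat.le_add_right ..)))
    · rw [hrepr, hB_inr]
      exact hb i j (by simpa using hij)

theorem exists_isConj_strictUpperTriangular {n : ℕ} {N : Matrix (Fin n) (Fin n) R}
    (hN : IsNilpotent N) :
    ∃ T : Matrix (Fin n) (Fin n) R, IsConj N T ∧ ∀ i j, j ≤ i → T i j = 0 := by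
  obtain ⟨m, b, hb⟩ := exists_basis_repr_eq_zero_of_isNilpotent (hN.map toLinAlgEquiv')
  obtain rfl : n = m := by simpa using Module.finrank_eq_card_basis b
  let e := Pi.basisFun R (Fin n)
  refine ⟨LinearMap.toMatrix b b (toLin' N), ⟨⟨b.toMatrix e, e.toMatrix b, by simp, by simp⟩, ?_⟩,
    fun i j hij ↦ ?_⟩
  · have hNe : LinearMap.toMatrix e e (toLin' N) = N := by
      simp [e, LinearMap.toMatrix_eq_toMatrix']
    calc b.toMatrix e * N
      _ = LinearMap.toMatrix e b (toLin' N) := by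
        rw [← basis_toMatrix_mul_linearMap_toMatrix e b e, hNe]
      _ = LinearMap.toMatrix b b (toLin' N) * b.toMatrix e := by
        rw [linearMap_toMatrix_mul_basis_toMatrix]
  · rw [LinearMap.toMatrix_apply]
    exact hb i j hij

end Triangularization

section NormalForm

lemma isConj_of_mul_eq_mul {n R : Type*} [Fintype n] [DecidableEq n] [CommRing R]
    {P A B : Matrix n n R} (hP : IsUnit P.det) (h : P * A = B * P) : IsConj A B :=
  ⟨((isUnit_iff_isUnit_det P).2 hP).unit, h⟩

lemma isConj_one_add_of_isConj_sub_one {S : Type*} [Ring S] {x y : S} (h : IsConj (x - 1) y) :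
    IsConj x (1 + y) := by
  obtain ⟨u, hu⟩ := h
  exact ⟨u, by simpa using (SemiconjBy.one_right (u : S)).add_right hu⟩

lemma exists_isCoprime_eq_mul {R : Type*} [CommRing R] [IsDomain R] [IsBezout R] (x y : R) :
    ∃ g x' y', IsCoprime x' y' ∧ x = g * x' ∧ y = g * y' := by
  classical
  let := IsBezout.toGCDDomain R
  obtain ⟨x', y', hx, hy, h⟩ := extract_gcd x y
  exact ⟨_, x', y', (gcd_isUnit_iff x' y').1 h, hx, hy⟩

variable {R : Type*} [CommRing R] [IsDomain R]

lemma exists_isConj_corner_of_row [IsBezout R] (a b : R) :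
    ∃ g : R, IsConj !![0, a, b; 0, 0, 0; 0, 0, 0] !![0, 0, g; 0, 0, 0; 0, 0, 0] := by
  obtain ⟨g, x, y, ⟨u, v, huv⟩, rfl, rfl⟩ := exists_isCoprime_eq_mul a b
  refine ⟨g, isConj_of_mul_eq_mul (P := !![1, 0, 0; 0, v, -u; 0, x, y]) ?_ (by simp)⟩
  have hdet : v * y + u * x = 1 := by linear_combination huv
  simp [det_fin_three, hdet]

lemma exists_isConj_corner_of_col [IsBezout R] (b c : R) :
    ∃ g : R, IsConj !![0, 0, b; 0, 0, c; 0, 0, 0] !![0, 0, g; 0, 0, 0; 0, 0, 0] := by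
  obtain ⟨g, x, y, ⟨u, v, huv⟩, rfl, rfl⟩ := exists_isCoprime_eq_mul b c
  refine ⟨g, isConj_of_mul_eq_mul (P := !![u, v, 0; -y, x, 0; 0, 0, 1]) ?_ ?_⟩
  · have hdet : u * x + v * y = 1 := huv
    simp [det_fin_three, hdet]
  · have hg : u * (g * x) + v * (g * y) = g := by linear_combination g * huv
    have h0 : -(y * (g * x)) + x * (g * y) = 0 := by ring
    simp [hg, h0]

variable [IsPrincipalIdealRing R]

theorem exists_isConj_of_isNilpotent_fin_three {N : Matrix (Fin 3) (Fin 3) R}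
    (hN : IsNilpotent N) :
    (∃ a b c, a ≠ 0 ∧ c ≠ 0 ∧ IsConj N !![0, a, b; 0, 0, c; 0, 0, 0]) ∨
      ∃ b, IsConj N !![0, 0, b; 0, 0, 0; 0, 0, 0] := by
  obtain ⟨T, hNT, hT⟩ := exists_isConj_strictUpperTriangular hN
  obtain ⟨a, b, c, rfl⟩ : ∃ a b c, T = !![0, a, b; 0, 0, c; 0, 0, 0] := by
    refine ⟨T 0 1, T 0 2, T 1 2, ?_⟩
    ext i j
    fin_cases i <;> fin_cases j <;> simp [hT]
  obtain rfl | ha := eq_or_ne a 0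
  · exact .inr ((exists_isConj_corner_of_col b c).imp fun _ ↦ hNT.trans)
  obtain rfl | hc := eq_or_ne c 0
  · exact .inr ((exists_isConj_corner_of_row a b).imp fun _ ↦ hNT.trans)
  exact .inl ⟨a, b, c, ha, hc, hNT⟩

theorem exists_isConj_of_charpoly_eq_X_sub_one_pow {A : Matrix (Fin 3) (Fin 3) R}
    (hchar : A.charpoly = (Polynomial.X - 1) ^ 3) :
    (∃ a b c, a ≠ 0 ∧ c ≠ 0 ∧ IsConj A !![1, a, b; 0, 1, c; 0, 0, 1]) ∨
      ∃ b, IsConj A !![1, 0, b; 0, 1, 0; 0, 0, 1] := by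
  have hN : IsNilpotent (A - 1) := ⟨3, by simpa [hchar] using A.aeval_self_charpoly⟩
  rcases exists_isConj_of_isNilpotent_fin_three hN with ⟨a, b, c, ha, hc, h⟩ | ⟨b, h⟩
  · exact .inl ⟨a, b, c, ha, hc, by
      simpa [one_fin_three] using isConj_one_add_of_isConj_sub_one h⟩
  · exact .inr ⟨b, by simpa [one_fin_three] using isConj_one_add_of_isConj_sub_one h⟩

end NormalForm

section Translation

lemma map_unitriangular {R S : Type*} [Semiring R] [Semiring S] (f : R →+* S) (a b c : R) :
    !![1, a, b; 0, 1, c; 0, 0, 1].map f = !![1, f a, f b; 0, 1, f c; 0, 0, 1] := by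
  ext i j
  fin_cases i <;> fin_cases j <;> simp

lemma mulVec_affine_conj {n K : Type*} [Fintype n] [Semiring K] {P A A' : Matrix n n K}
    {v v' c : n → K} (h : P * A = A' * P) (hc : P *ᵥ v + c = A' *ᵥ c + v') (x : n → K) :
    P *ᵥ (A *ᵥ x + v) + c = A' *ᵥ (P *ᵥ x + c) + v' := by
  rw [mulVec_add, mulVec_add, mulVec_mulVec, mulVec_mulVec, h, add_assoc, add_assoc, hc]

variable {K : Type*} [Field K] (w : Fin 3 → K)

lemma exists_add_eq_mulVec_add_of_superdiagonal_ne_zero {a c₀ : K} (b : K) (ha : a ≠ 0)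
    (hc₀ : c₀ ≠ 0) :
    ∃ c z, w + c = !![1, a, b; 0, 1, c₀; 0, 0, 1] *ᵥ c + ![0, 0, z] := by
  refine ⟨![0, (w 0 - b * (w 1 / c₀)) / a, w 1 / c₀], w 2, ?_⟩
  ext i
  fin_cases i <;> simp <;> field_simp <;> ring

lemma exists_add_eq_mulVec_add_of_corner_ne_zero {b : K} (hb : b ≠ 0) :
    ∃ c y z, w + c = !![1, 0, b; 0, 1, 0; 0, 0, 1] *ᵥ c + ![0, y, z] := by
  refine ⟨![0, 0, w 0 / b], w 1, w 2, ?_⟩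
  ext i
  fin_cases i <;> simp [field, add_comm]

end Translation

theorem stmt_3_general {R K : Type*} [CommRing R] [IsDomain R] [IsPrincipalIdealRing R]
    [Field K] [Algebra R K] [FaithfulSMul R K] (A : Matrix (Fin 3) (Fin 3) R)
    (hchar : A.charpoly = (Polynomial.X - 1) ^ 3) (v : Fin 3 → K) :
    ∃ P : Matrix (Fin 3) (Fin 3) R, IsUnit P ∧ ∃ c : Fin 3 → K,
      ∃ (A' : Matrix (Fin 3) (Fin 3) R) (v' : Fin 3 → K),
        (∀ x : Fin 3 → K,
          P.map (algebraMap R K) *ᵥ (A.map (algebraMap R K) *ᵥ x + v) + c =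
            A'.map (algebraMap R K) *ᵥ (P.map (algebraMap R K) *ᵥ x + c) + v') ∧
        ((∃ a b c₀ : R, a ≠ 0 ∧ c₀ ≠ 0 ∧ A' = !![1, a, b; 0, 1, c₀; 0, 0, 1] ∧
            ∃ z : K, v' = ![0, 0, z]) ∨
         (∃ b : R, b ≠ 0 ∧ A' = !![1, 0, b; 0, 1, 0; 0, 0, 1] ∧
            ∃ y z : K, v' = ![0, y, z]) ∨
         A' = 1) := by
  have hinj := FaithfulSMul.algebraMap_injective R K
  have hmap {P A' : Matrix (Fin 3) (Fin 3) R} (h : P * A = A' * P) :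
      P.map (algebraMap R K) * A.map (algebraMap R K) =
        A'.map (algebraMap R K) * P.map (algebraMap R K) := by
    rw [← Matrix.map_mul, h, Matrix.map_mul]
  rcases exists_isConj_of_charpoly_eq_X_sub_one_pow hchar with
    ⟨a, b, c₀, ha, hc₀, P, hP⟩ | ⟨b, P, hP⟩
  · obtain ⟨c, z, hc⟩ := exists_add_eq_mulVec_add_of_superdiagonal_ne_zero
      (P.val.map (algebraMap R K) *ᵥ v) (algebraMap R K b)
      ((map_ne_zero_iff _ hinj).2 ha) ((map_ne_zero_iff _ hinj).2 hc₀)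
    exact ⟨P, P.isUnit, c, _, _, mulVec_affine_conj (hmap hP.eq)
      (by simpa [map_unitriangular] using hc),
      .inl ⟨a, b, c₀, ha, hc₀, rfl, z, rfl⟩⟩
  obtain rfl | hb := eq_or_ne b 0
  · exact ⟨P, P.isUnit, 0, _, P.val.map (algebraMap R K) *ᵥ v,
      mulVec_affine_conj (hmap hP.eq) (by simp), .inr (.inr one_fin_three.symm)⟩
  · obtain ⟨c, y, z, hc⟩ := exists_add_eq_mulVec_add_of_corner_ne_zero
      (P.val.map (algebraMap R K) *ᵥ v) ((map_ne_zero_iff _ hinj).2 hb)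
    exact ⟨P, P.isUnit, c, _, _, mulVec_affine_conj (hmap hP.eq)
      (by simpa [map_unitriangular] using hc),
      .inr (.inl ⟨b, hb, rfl, y, z, rfl⟩)⟩

/-- an affine transformation `x ↦ A x + v` of ℝ³ with `A ∈ GL₃(ℤ)` unipotent
(characteristic polynomial `(t-1)³`) is conjugate, by an affine map `x ↦ P x + c` with
`P ∈ GL₃(ℤ)`, to an affine map `x ↦ A' x + v'` of one of three normal forms. -/
theorem stmt_3 (A : Matrix (Fin 3) (Fin 3) ℤ) (hA : IsUnit A)
    (hchar : A.charpoly = (Polynomial.X - 1) ^ 3) (v : Fin 3 → ℝ) :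
    ∃ P : Matrix (Fin 3) (Fin 3) ℤ, IsUnit P ∧ ∃ c : Fin 3 → ℝ,
      ∃ (A' : Matrix (Fin 3) (Fin 3) ℤ) (v' : Fin 3 → ℝ),
        (∀ x : Fin 3 → ℝ,
            (P.map (Int.cast : ℤ → ℝ)).mulVec ((A.map (Int.cast : ℤ → ℝ)).mulVec x + v) + c =
            (A'.map (Int.cast : ℤ → ℝ)).mulVec ((P.map (Int.cast : ℤ → ℝ)).mulVec x + c) + v') ∧
        ((∃ a b c₀ : ℤ, a ≠ 0 ∧ c₀ ≠ 0 ∧ A' = !![1, a, b; 0, 1, c₀; 0, 0, 1] ∧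
            ∃ z : ℝ, v' = ![0, 0, z]) ∨
         (∃ b : ℤ, b ≠ 0 ∧ A' = !![1, 0, b; 0, 1, 0; 0, 0, 1] ∧
            ∃ y z : ℝ, v' = ![0, y, z]) ∨
         A' = 1) :=
  stmt_3_general A hchar v
end

section
/- Let A ∈ SL₂(ℤ) have both eigenvalues equal to 1 (equivalently, trace A = 2). Then there exists C ∈ GL₂(ℤ) such that C A C⁻¹ = [[1,m],[0,1]] for some integer m ≥ 0; this m is uniquely determined by A (if C' ∈ GL₂(ℤ) and m' ≥ 0 satisfy C' A C'⁻¹ = [[1,m'],[0,1]], then m' = m) and equals the greatest common divisor of the four entries of the matrix A − I (so m = 0 exactly when A = I). -/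
/-!
Put `N = A - 1`, so that `det N = tr N = 0`. A primitive vector in the left kernel of `N` can be
completed to a matrix of determinant one with that vector as bottom row; conjugating by it makes
the bottom row of `N` vanish, and the trace condition then kills the top left entry. Only the top
right entry `m` survives, and rescaling the first basis vector by a unit normalizes it. Since
invertible matrices preserve the gcd of the entries, `m` can only be the gcd of the entries of `N`.
-/

open Matrix

section EntryGCD

variable {l m n R : Type*} [Fintype l] [Fintype m] [Fintype n]

section MonoidWithZero

variable [CommMonoidWithZero R] [NormalizedGCDMonoid R]

/-- The normalized gcd of all entries of a matrix (its content, or first determinantal divisor),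
an invariant of the matrix under multiplication by invertible matrices on either side. -/
def entryGCD (M : Matrix m n R) : R :=
  Finset.univ.gcd fun p : m × n => M p.1 p.2

theorem dvd_entryGCD_iff {M : Matrix m n R} {d : R} : d ∣ entryGCD M ↔ ∀ i j, d ∣ M i j := by
  simp only [entryGCD, Finset.dvd_gcd_iff, Finset.mem_univ, true_imp_iff, Prod.forall]

theorem entryGCD_dvd (M : Matrix m n R) (i : m) (j : n) : entryGCD M ∣ M i j :=
  dvd_entryGCD_iff.mp dvd_rfl i j

theorem normalize_entryGCD (M : Matrix m n R) : normalize (entryGCD M) = entryGCD M :=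
  Finset.normalize_gcd

theorem entryGCD_fin_two_topRight (b : R) : entryGCD !![0, b; 0, 0] = normalize b := by
  refine dvd_antisymm_of_normalize_eq (normalize_entryGCD _) (normalize_idem b) ?_ ?_
  · exact (entryGCD_dvd !![0, b; 0, 0] 0 1).trans (dvd_normalize_iff.mpr dvd_rfl)
  · simp [dvd_entryGCD_iff, Fin.forall_fin_two]

end MonoidWithZero

variable [CommSemiring R] [NormalizedGCDMonoid R]

theorem entryGCD_dvd_entryGCD_mul_left (P : Matrix l m R) (M : Matrix m n R) :
    entryGCD M ∣ entryGCD (P * M) :=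
  dvd_entryGCD_iff.mpr fun _ j =>
    Finset.dvd_sum fun k _ => (entryGCD_dvd M k j).mul_left _

theorem entryGCD_dvd_entryGCD_mul_right (M : Matrix l m R) (P : Matrix m n R) :
    entryGCD M ∣ entryGCD (M * P) :=
  dvd_entryGCD_iff.mpr fun i _ =>
    Finset.dvd_sum fun k _ => (entryGCD_dvd M i k).mul_right _

theorem entryGCD_mul_left_of_isUnit [DecidableEq m] {C : Matrix m m R} (hC : IsUnit C)
    (M : Matrix m n R) : entryGCD (C * M) = entryGCD M := by
  obtain ⟨D, hD⟩ := hC.exists_left_inv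
  refine dvd_antisymm_of_normalize_eq (normalize_entryGCD _) (normalize_entryGCD _) ?_
    (entryGCD_dvd_entryGCD_mul_left C M)
  simpa only [← Matrix.mul_assoc, hD, Matrix.one_mul] using
    entryGCD_dvd_entryGCD_mul_left D (C * M)

theorem entryGCD_mul_right_of_isUnit [DecidableEq n] {C : Matrix n n R} (hC : IsUnit C)
    (M : Matrix m n R) : entryGCD (M * C) = entryGCD M := by
  obtain ⟨D, hD⟩ := hC.exists_right_inv
  refine dvd_antisymm_of_normalize_eq (normalize_entryGCD _) (normalize_entryGCD _) ?_
    (entryGCD_dvd_entryGCD_mul_right M C)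
  simpa only [Matrix.mul_assoc, hD, Matrix.mul_one] using
    entryGCD_dvd_entryGCD_mul_right (M * C) D

theorem entryGCD_eq_of_mul_eq_mul [DecidableEq n] {C M N : Matrix n n R} (hC : IsUnit C)
    (h : C * M = N * C) : entryGCD M = entryGCD N := by
  rw [← entryGCD_mul_left_of_isUnit hC M, h, entryGCD_mul_right_of_isUnit hC N]

end EntryGCD

section FinTwo

variable {R : Type*}

theorem mul_eq_unipotent_mul_iff [Ring R] {C A : Matrix (Fin 2) (Fin 2) R} {b : R} :
    C * A = !![1, b; 0, 1] * C ↔ C * (A - 1) = !![0, b; 0, 0] * C := by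
  have h_unipotent : !![1, b; 0, 1] = !![0, b; 0, 0] + (1 : Matrix (Fin 2) (Fin 2) R) := by
    simp [one_fin_two]
  rw [h_unipotent, Matrix.add_mul, Matrix.one_mul, Matrix.mul_sub, Matrix.mul_one,
    sub_eq_iff_eq_add]

theorem diagonal_mul_upperTriangular_fin_two [CommSemiring R] (u a b d : R) :
    !![u, 0; 0, 1] * !![a, b; 0, d] = !![a, u * b; 0, d] * !![u, 0; 0, 1] := by
  simp [mul_comm]

variable [CommRing R]

theorem det_sub_one_fin_two (A : Matrix (Fin 2) (Fin 2) R) :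
    (A - 1).det = A.det - A.trace + 1 := by
  simp only [det_fin_two, trace_fin_two, Matrix.sub_apply, one_apply_eq,
    one_apply_ne zero_ne_one, one_apply_ne one_ne_zero]
  ring

theorem exists_isCoprime_vecMul_eq_zero [IsDomain R] [IsBezout R] {N : Matrix (Fin 2) (Fin 2) R}
    (hN : N.det = 0) : ∃ v : Fin 2 → R, IsCoprime (v 0) (v 1) ∧ v ᵥ* N = 0 := by
  classical
  let := IsBezout.toGCDDomain R
  obtain ⟨w, hw, hwN⟩ := exists_vecMul_eq_zero_iff.mpr hN
  obtain ⟨r, s, hr, hs, hrs⟩ := extract_gcd (w 0) (w 1)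
  set g := gcd (w 0) (w 1)
  have hw_smul : w = g • ![r, s] := by
    ext i
    fin_cases i
    exacts [hr, hs]
  have hg : g ≠ 0 := fun hg => hw (by rw [hw_smul, hg, zero_smul])
  refine ⟨![r, s], (gcd_isUnit_iff r s).mp hrs, ?_⟩
  rw [hw_smul, smul_vecMul] at hwN
  exact (smul_eq_zero.mp hwN).resolve_left hg

theorem exists_det_eq_one_mul_eq_topRow_mul [IsDomain R] [IsBezout R]
    {N : Matrix (Fin 2) (Fin 2) R} (hN : N.det = 0) :
    ∃ (C : Matrix (Fin 2) (Fin 2) R) (b : R), C.det = 1 ∧ C * N = !![N.trace, b; 0, 0] * C := by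
  obtain ⟨v, hv, hvN⟩ := exists_isCoprime_vecMul_eq_zero hN
  obtain ⟨⟨C, hC⟩, hC0, hC1⟩ := hv.exists_SL2_row 1
  obtain ⟨D, hDC⟩ : ∃ D, D * C = 1 := ⟨adjugate C, by rw [adjugate_mul, hC, one_smul]⟩
  have h_row : (C * N * D) 1 = 0 := by
    have hCv : C 1 = v := by
      ext j
      fin_cases j
      exacts [hC0, hC1]
    rw [mul_apply_eq_vecMul, mul_apply_eq_vecMul, hCv, hvN, zero_vecMul]
  have h_corner : (C * N * D) 0 0 = N.trace := by
    have h_trace : (C * N * D).trace = N.trace := by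
      rw [trace_mul_comm, ← Matrix.mul_assoc, hDC, Matrix.one_mul]
    rwa [trace_fin_two, h_row, Pi.zero_apply, add_zero] at h_trace
  have h_conj : C * N * D = !![N.trace, (C * N * D) 0 1; 0, 0] := by
    ext i j
    fin_cases i <;> fin_cases j
    exacts [h_corner, rfl, congrFun h_row 0, congrFun h_row 1]
  refine ⟨C, (C * N * D) 0 1, hC, ?_⟩
  rw [← h_conj, Matrix.mul_assoc, hDC, Matrix.mul_one]

theorem exists_isUnit_mul_eq_entryGCD_mul [IsDomain R] [IsBezout R] [NormalizedGCDMonoid R]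
    {N : Matrix (Fin 2) (Fin 2) R} (hdet : N.det = 0) (htr : N.trace = 0) :
    ∃ C : Matrix (Fin 2) (Fin 2) R, IsUnit C ∧ C * N = !![0, entryGCD N; 0, 0] * C := by
  obtain ⟨C, b, hC, h⟩ := exists_det_eq_one_mul_eq_topRow_mul hdet
  rw [htr] at h
  have hC_unit : IsUnit C := (isUnit_iff_isUnit_det C).mpr (by simp only [hC, isUnit_one])
  have hN : entryGCD N = normUnit b * b := by
    rw [entryGCD_eq_of_mul_eq_mul hC_unit h, entryGCD_fin_two_topRight, normalize_apply, mul_comm]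
  have h_diag : IsUnit !![(normUnit b : R), 0; 0, 1] := by
    simp [isUnit_iff_isUnit_det]
  refine ⟨!![(normUnit b : R), 0; 0, 1] * C, h_diag.mul hC_unit, ?_⟩
  rw [Matrix.mul_assoc, h, ← Matrix.mul_assoc, diagonal_mul_upperTriangular_fin_two,
    Matrix.mul_assoc, hN]

theorem eq_entryGCD_of_mul_eq_unipotent_mul [NormalizedGCDMonoid R]
    {A C : Matrix (Fin 2) (Fin 2) R} {b : R} (hC : IsUnit C) (hb : normalize b = b)
    (h : C * A = !![1, b; 0, 1] * C) : b = entryGCD (A - 1) := by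
  rw [entryGCD_eq_of_mul_eq_mul hC (mul_eq_unipotent_mul_iff.mp h), entryGCD_fin_two_topRight, hb]

end FinTwo

theorem stmt_4_general {R : Type*} [CommRing R] [IsDomain R] [IsBezout R] [NormalizedGCDMonoid R]
    (A : Matrix (Fin 2) (Fin 2) R) (hdet : A.det = 1) (htr : A.trace = 2) :
    ∃ (C : Matrix (Fin 2) (Fin 2) R) (m : R), IsUnit C ∧ normalize m = m ∧
      C * A = !![1, m; 0, 1] * C ∧
      (∀ (C' : Matrix (Fin 2) (Fin 2) R) (m' : R), IsUnit C' → normalize m' = m' →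
        C' * A = !![1, m'; 0, 1] * C' → m' = m) ∧
      m = entryGCD (A - 1) := by
  have hdet_sub : (A - 1).det = 0 := by
    rw [det_sub_one_fin_two, hdet, htr]
    ring
  have htr_sub : (A - 1).trace = 0 := by simp [trace_sub, htr]
  obtain ⟨C, hC, h⟩ := exists_isUnit_mul_eq_entryGCD_mul hdet_sub htr_sub
  exact ⟨C, entryGCD (A - 1), hC, normalize_entryGCD _, mul_eq_unipotent_mul_iff.mpr h,
    fun _ _ hC' hm' h' => eq_entryGCD_of_mul_eq_unipotent_mul hC' hm' h', rfl⟩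

/-- any `A ∈ SL₂(ℤ)` with trace 2 is conjugate in `GL₂(ℤ)` to `[[1,m],[0,1]]` with
`m ≥ 0`; this `m` is unique and equals the gcd of the entries of `A - I`. -/
theorem stmt_4 (A : Matrix (Fin 2) (Fin 2) ℤ) (hdet : A.det = 1) (htr : A.trace = 2) :
    ∃ (C : Matrix (Fin 2) (Fin 2) ℤ) (m : ℤ), IsUnit C ∧ 0 ≤ m ∧
      C * A = !![1, m; 0, 1] * C ∧
      (∀ (C' : Matrix (Fin 2) (Fin 2) ℤ) (m' : ℤ), IsUnit C' → 0 ≤ m' →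
        C' * A = !![1, m'; 0, 1] * C' → m' = m) ∧
      m = Finset.univ.gcd (fun p : Fin 2 × Fin 2 => (A - 1) p.1 p.2) := by
  simpa only [entryGCD, Int.nonneg_iff_normalize_eq_self] using stmt_4_general A hdet htr
end

section
/- Let a₁, b₂, c₁ be nonzero integers, b₁ ∈ ℤ, z₁, x₂, y₂, z₂, x₃ ∈ ℝ with x₃ ≠ 0, and let Γ be the group of affine transformations of ℝ³ generated by g = ([[1,a₁,b₁],[0,1,c₁],[0,0,1]], (0,0,z₁)), h = ([[1,0,b₂],[0,1,0],[0,0,1]], (x₂,y₂,z₂)) and the pure translation t = (I, (x₃,0,0)). Assume that the translation subgroup of Γ has rank 1, i.e., the vector part of every pure translation belonging to Γ is a real multiple of (x₃,0,0). Then Γ acts freely and properly discontinuously on ℝ³ if and only if z₂ = 0, z₁·y₂·x₃ ≠ 0 and (a₁·y₂ − b₂·z₁)/x₃ ∈ ℚ; in that case the orbit space ℝ³/Γ is compact. -/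
open Matrix

noncomputable section

/-- ℝ³ as the space of triples of reals. -/
abbrev E3 : Type := Fin 3 → ℝ

/-- The group of invertible affine transformations of ℝ³. -/
abbrev AffT : Type := E3 ≃ᵃ[ℝ] E3

/-- `γ` is the affine transformation `x ↦ A x + v` with linear part `A` and vector part `v`. -/
def HasForm (γ : AffT) (A : Matrix (Fin 3) (Fin 3) ℝ) (v : E3) : Prop :=
  ∀ x, γ x = A.mulVec x + v

/-- `γ` is the pure translation by the vector `v`. -/
def IsTranslationBy (γ : AffT) (v : E3) : Prop :=
  ∀ x, γ x = x + v

/-- The group `Γ` acts freely on ℝ³. -/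
def IsFreeAction (Γ : Subgroup AffT) : Prop :=
  ∀ γ ∈ Γ, (∃ x : E3, γ x = x) → γ = 1

/-- The group `Γ` acts properly discontinuously on ℝ³. -/
def IsProperlyDiscontinuous (Γ : Subgroup AffT) : Prop :=
  ∀ K L : Set E3, IsCompact K → IsCompact L →
    {γ : AffT | γ ∈ Γ ∧ ((γ '' K) ∩ L).Nonempty}.Finite

/-- The orbit equivalence relation of `Γ` on ℝ³. -/
def orbitSetoid (Γ : Subgroup AffT) : Setoid E3 where
  r x y := ∃ γ ∈ Γ, γ x = y
  iseqv := by
    constructor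
    · intro x; exact ⟨1, Γ.one_mem, rfl⟩
    · rintro x y ⟨γ, hγ, h⟩
      exact ⟨γ⁻¹, Γ.inv_mem hγ, by rw [← h]; exact γ.symm_apply_apply x⟩
    · rintro x y z ⟨γ, hγ, h⟩ ⟨δ, hδ, h'⟩
      exact ⟨δ * γ, Γ.mul_mem hδ hγ, by simp [← h', ← h]⟩

/-- The orbit space `ℝ³/Γ`, equipped with the quotient topology, is compact. -/
def HasCompactQuotient (Γ : Subgroup AffT) : Prop :=
  CompactSpace (Quotient (orbitSetoid Γ))

/-!
The commutator `⁅g, h⁆` is a translation by a vector with second coordinate `c₁ * z₂`, so rank one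
forces `z₂ = 0`. The remaining conditions come from proper discontinuity by a pigeonhole
principle: if `u, v ∈ Γ`, `v` is the translation by `w`, the linear part of `u` fixes `w`, and `u`
moves some point along `ℝ w`, then correcting the powers of `u` by powers of `v` gives infinitely
many words that move this point within a segment, so two of the words agree and `u ^ n = v ^ m`
for some `n ≠ 0`. For `v = t` this applies to `g` if `z₁ = 0` and to `h` if `y₂ = 0`, where it
contradicts the shear in the linear part; for the translation `⁅g, h⁆` it gives the rationality
condition.

Conversely, commensurability puts `t` and `⁅g, h⁆` in the powers of one translation `τ`. Adjoining
`τ`, `h`, `g` in this order, each new element normalizes the group built so far and shifts a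
coordinate that this group fixes; such an extension preserves freeness and proper discontinuity.
Powers of `g`, `h`, `t`, applied in this order, move any point into a fixed box.
-/

open scoped commutatorElement Pointwise

section GroupTheory

variable {G : Type*} [Group G]

theorem exists_eq_mul_zpow_of_mem_sup_zpowers {N : Subgroup G} {u γ : G}
    (hu : u ∈ Subgroup.normalizer (N : Set G)) (hγ : γ ∈ N ⊔ Subgroup.zpowers u) :
    ∃ ν ∈ N, ∃ m : ℤ, γ = ν * u ^ m := by
  rw [← SetLike.mem_coe, Subgroup.coe_mul_of_right_le_normalizer_left _ _
    (Subgroup.zpowers_le.mpr hu)] at hγ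
  obtain ⟨ν, hν, _, ⟨m, rfl⟩, rfl⟩ := hγ
  exact ⟨ν, hν, m, rfl⟩

theorem mem_normalizer_zpowers_sup_zpowers {g h τ : G} {j : ℤ}
    (hgτ : Commute g τ) (hgh : ⁅g, h⁆ = τ ^ j) :
    g ∈ Subgroup.normalizer
      ((Subgroup.zpowers τ ⊔ Subgroup.zpowers h : Subgroup G) : Set G) := by
  have conj_τ : g * τ * g⁻¹ = τ := mul_inv_eq_of_eq_mul hgτ
  have conj_h : g * h * g⁻¹ = τ ^ j * h := by rw [← hgh, commutatorElement_def]; group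
  rw [Subgroup.mem_normalizer_iff_map_conj_eq, Subgroup.map_sup, MonoidHom.map_zpowers,
    MonoidHom.map_zpowers]
  simp only [MonoidHom.coe_coe, MulAut.conj_apply, conj_τ, conj_h]
  have mem_τ (i : ℤ) (x : G) : τ ^ i ∈ Subgroup.zpowers τ ⊔ Subgroup.zpowers x :=
    Subgroup.mem_sup_left (Subgroup.zpow_mem_zpowers τ i)
  have mem_right (x : G) : x ∈ Subgroup.zpowers τ ⊔ Subgroup.zpowers x :=
    Subgroup.mem_sup_right (Subgroup.mem_zpowers x)
  refine le_antisymm (sup_le le_sup_left ?_) (sup_le le_sup_left ?_) <;>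
    rw [Subgroup.zpowers_le]
  · exact mul_mem (mem_τ j h) (mem_right h)
  · exact (Subgroup.mul_mem_cancel_left _ (mem_τ j _)).mp (mem_right (τ ^ j * h))

end GroupTheory

section AffineEquiv

variable {k V P : Type*} [Ring k] [AddCommGroup V] [Module k V] [AddTorsor V P]

theorem commute_constVAdd_of_linear_eq {e : P ≃ᵃ[k] P} {w : V} (he : e.linear w = w) :
    Commute e (AffineEquiv.constVAdd k P w) :=
  AffineEquiv.ext fun p => by simp [he]

theorem zpow_apply_eq_of_commute {e f : P ≃ᵃ[k] P} (hef : Commute e f) {p : P}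
    (hp : e p = f p) (n : ℤ) : (e ^ n) p = (f ^ n) p := by
  have succ_e (m : ℤ) : (e ^ (m + 1)) p = f ((e ^ m) p) := calc
    (e ^ (m + 1)) p = (e ^ m * f) p := by rw [_root_.zpow_add_one]; simp [hp]
    _ = f ((e ^ m) p) := by rw [(hef.zpow_left m).eq]; rfl
  have succ_f (m : ℤ) : (f ^ (m + 1)) p = f ((f ^ m) p) := by rw [← mul_self_zpow]; rfl
  induction n with
  | zero => simp
  | succ n ih => rw [succ_e, succ_f, ih]
  | pred n ih =>
    apply f.injective
    rw [← succ_e, ← succ_f, sub_add_cancel, ih]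

theorem apply_zpow_eq_add_zsmul {A : Type*} [AddCommGroup A] {e : P ≃ᵃ[k] P} {φ δ : P → A}
    (hφ : ∀ p, φ (e p) = φ p + δ p) (hδ : ∀ p, δ (e p) = δ p) (n : ℤ) (p : P) :
    φ ((e ^ n) p) = φ p + n • δ p := by
  induction n generalizing p with
  | zero => simp
  | succ n ih =>
    rw [_root_.zpow_add_one, AffineEquiv.coe_mul, Function.comp_apply, ih, hφ, hδ]
    module
  | pred n ih =>
    obtain ⟨q, rfl⟩ := e.surjective p
    rw [_root_.zpow_sub_one, AffineEquiv.coe_mul, Function.comp_apply, AffineEquiv.inv_def,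
      AffineEquiv.symm_apply_apply, ih, hφ, hδ]
    module

theorem eq_of_zpow_eq_zpow {A : Type*} [AddCommGroup A] [IsAddTorsionFree A] {e f : P ≃ᵃ[k] P}
    {φ δ : P → A} {c : A} (he : ∀ p, φ (e p) = φ p + δ p) (hδ : ∀ p, δ (e p) = δ p)
    (hf : ∀ p, φ (f p) = φ p + c) {n m : ℤ} (hn : n ≠ 0) (hef : e ^ n = f ^ m) (p q : P) :
    δ p = δ q := by
  have zsmul_eq (r : P) : n • δ r = m • c := add_left_cancel <| calc
    φ r + n • δ r = φ ((e ^ n) r) := (apply_zpow_eq_add_zsmul he hδ n r).symm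
    _ = φ ((f ^ m) r) := by rw [hef]
    _ = φ r + m • c := apply_zpow_eq_add_zsmul hf (fun _ => rfl) m r
  exact zsmul_right_injective hn ((zsmul_eq p).trans (zsmul_eq q).symm)

theorem commutatorElement_eq_constVAdd {e f : P ≃ᵃ[k] P} {w : V}
    (hef : ∀ p, e (f p) = w +ᵥ f (e p)) : ⁅e, f⁆ = AffineEquiv.constVAdd k P w :=
  AffineEquiv.ext fun p => by
    simp [commutatorElement_def, AffineEquiv.inv_def, hef]

end AffineEquiv

theorem zpow_apply_of_apply_eq_add {u : AffT} {i : Fin 3} {c : ℝ} (hu : ∀ x, u x i = x i + c)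
    (m : ℤ) (x : E3) : (u ^ m) x i = x i + m * c := by
  simpa using apply_zpow_eq_add_zsmul (φ := (· i)) hu (fun _ => rfl) m x

theorem IsTranslationBy.eq_constVAdd {γ : AffT} {v : E3} (hγ : IsTranslationBy γ v) :
    γ = AffineEquiv.constVAdd ℝ E3 v :=
  AffineEquiv.ext fun x => by simp [hγ x, add_comm]

section Unitriangular

variable {γ : AffT} {a b c x y z : ℝ}

theorem HasForm.apply_unitriangular (hγ : HasForm γ !![1, a, b; 0, 1, c; 0, 0, 1] ![x, y, z])
    (p : E3) :
    γ p = ![p 0 + a * p 1 + b * p 2 + x, p 1 + c * p 2 + y, p 2 + z] := by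
  rw [hγ p]
  ext i
  fin_cases i <;> simp [dotProduct, Fin.sum_univ_three]

theorem HasForm.linear_eq {A : Matrix (Fin 3) (Fin 3) ℝ} {v : E3} (hγ : HasForm γ A v) (w : E3) :
    γ.linear w = A.mulVec w := by
  simpa [hγ w, hγ 0] using (γ.map_vadd 0 w).symm

theorem HasForm.linear_unitriangular
    (hγ : HasForm γ !![1, a, b; 0, 1, c; 0, 0, 1] ![x, y, z]) (r : ℝ) :
    γ.linear ![r, 0, 0] = ![r, 0, 0] := by
  rw [hγ.linear_eq]
  ext i
  fin_cases i <;> simp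

end Unitriangular

section Necessity

variable {Γ : Subgroup AffT}

theorem IsProperlyDiscontinuous.exists_zpow_eq_zpow (hΓ : IsProperlyDiscontinuous Γ)
    {u v : AffT} (hu : u ∈ Γ) (hv : v ∈ Γ) {w p : E3} {c : ℝ} (hvw : IsTranslationBy v w)
    (huw : u.linear w = w) (hup : u p = p + c • w) :
    ∃ n m : ℤ, n ≠ 0 ∧ u ^ n = v ^ m := by
  let word (n : ℤ) : AffT := v ^ (-⌊n * c⌋) * u ^ n
  have u_zpow_apply (n : ℤ) : (u ^ n) p = p + (n * c) • w := by
    have hcomm : Commute u (AffineEquiv.constVAdd ℝ E3 (c • w)) :=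
      commute_constVAdd_of_linear_eq (by rw [map_smul, huw])
    rw [zpow_apply_eq_of_commute hcomm (by simp [hup, add_comm]), ← AffineEquiv.constVAdd_zsmul,
      AffineEquiv.constVAdd_apply, vadd_eq_add, ← Int.cast_smul_eq_zsmul ℝ, smul_smul, add_comm]
  have word_apply (n : ℤ) : word n p = p + Int.fract (n * c) • w := by
    simp only [word, AffineEquiv.coe_mul, Function.comp_apply, u_zpow_apply, hvw.eq_constVAdd,
      ← AffineEquiv.constVAdd_zsmul, AffineEquiv.constVAdd_apply, vadd_eq_add, Int.fract]
    module
  have word_mem (n : ℤ) : word n ∈ Γ := mul_mem (zpow_mem hv _) (zpow_mem hu n)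
  have segment_compact : IsCompact ((fun r : ℝ => p + r • w) '' Set.Icc 0 1) :=
    isCompact_Icc.image (by fun_prop)
  have word_mapsTo : Set.MapsTo word Set.univ
      {γ | γ ∈ Γ ∧ (γ '' {p} ∩ (fun r : ℝ => p + r • w) '' Set.Icc 0 1).Nonempty} := fun n _ =>
    ⟨word_mem n, word n p, ⟨p, Set.mem_singleton p, rfl⟩,
      Int.fract (n * c), ⟨Int.fract_nonneg _, (Int.fract_lt_one _).le⟩, (word_apply n).symm⟩
  obtain ⟨n, -, n', -, hne, heq⟩ := Set.infinite_univ.exists_ne_map_eq_of_mapsTo word_mapsTo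
    (hΓ {p} _ isCompact_singleton segment_compact)
  refine ⟨n - n', ⌊n * c⌋ - ⌊n' * c⌋, sub_ne_zero.mpr hne, ?_⟩
  have heq' : v ^ (-⌊n * c⌋) * u ^ n = v ^ (-⌊n' * c⌋) * u ^ n' := heq
  rw [_root_.zpow_sub, _root_.zpow_sub, mul_inv_eq_iff_eq_mul]
  rw [_root_.zpow_neg, _root_.zpow_neg, inv_mul_eq_iff_eq_mul] at heq'
  rw [heq', mul_assoc]

theorem IsProperlyDiscontinuous.exists_rat_eq_div (hΓ : IsProperlyDiscontinuous Γ)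
    {u v : AffT} (hu : u ∈ Γ) (hv : v ∈ Γ) {s x : ℝ} (hx : x ≠ 0)
    (hus : IsTranslationBy u ![s, 0, 0]) (hvx : IsTranslationBy v ![x, 0, 0]) :
    ∃ q : ℚ, s / x = q := by
  have hup : u 0 = 0 + (s / x) • ![x, 0, 0] := by simp [hus 0, hx]
  obtain ⟨n, m, hn, hnm⟩ := hΓ.exists_zpow_eq_zpow hu hv hvx (by simp [hus.eq_constVAdd]) hup
  have hn' : (n : ℝ) ≠ 0 := Int.cast_ne_zero.mpr hn
  rw [hus.eq_constVAdd, hvx.eq_constVAdd, ← AffineEquiv.constVAdd_zsmul,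
    ← AffineEquiv.constVAdd_zsmul] at hnm
  have hcoord : n * s = m * x := by simpa using congrFun (DFunLike.congr_fun hnm 0) 0
  refine ⟨m / n, ?_⟩
  push_cast
  field_simp
  linarith

theorem IsProperlyDiscontinuous.z_shift_ne_zero (hΓ : IsProperlyDiscontinuous Γ)
    {u v : AffT} (hu : u ∈ Γ) (hv : v ∈ Γ) {a b c x y z r : ℝ} (hc : c ≠ 0) (hr : r ≠ 0)
    (hform : HasForm u !![1, a, b; 0, 1, c; 0, 0, 1] ![x, y, z])
    (hvr : IsTranslationBy v ![r, 0, 0]) : z ≠ 0 := by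
  rintro rfl
  let p : E3 := ![0, 0, -y / c]
  have hup : u p = p + ((b * (-y / c) + x) / r) • ![r, 0, 0] := by
    ext i
    fin_cases i <;> simp [p, hform.apply_unitriangular, hr]
    field_simp
    ring
  obtain ⟨n, m, hn, hnm⟩ :=
    hΓ.exists_zpow_eq_zpow hu hv hvr (hform.linear_unitriangular r) hup
  have shear_const : c * (![0, 0, 1] : E3) 2 + y = c * (0 : E3) 2 + y :=
    eq_of_zpow_eq_zpow (φ := fun q => q 1) (δ := fun q => c * q 2 + y) (c := 0)
      (fun q => by simp [hform.apply_unitriangular, add_assoc])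
      (fun q => by simp [hform.apply_unitriangular]) (fun q => by simp [hvr q]) hn hnm _ _
  exact hc (by simpa using shear_const)

theorem IsProperlyDiscontinuous.y_shift_ne_zero (hΓ : IsProperlyDiscontinuous Γ)
    {u v : AffT} (hu : u ∈ Γ) (hv : v ∈ Γ) {b x y r : ℝ} (hb : b ≠ 0) (hr : r ≠ 0)
    (hform : HasForm u !![1, 0, b; 0, 1, 0; 0, 0, 1] ![x, y, 0])
    (hvr : IsTranslationBy v ![r, 0, 0]) : y ≠ 0 := by
  rintro rfl
  have hup : u 0 = 0 + (x / r) • ![r, 0, 0] := by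
    simp [hform.apply_unitriangular, hr]
  obtain ⟨n, m, hn, hnm⟩ :=
    hΓ.exists_zpow_eq_zpow hu hv hvr (hform.linear_unitriangular r) hup
  have shear_const : b * (![0, 0, 1] : E3) 2 + x = b * (0 : E3) 2 + x :=
    eq_of_zpow_eq_zpow (φ := fun q => q 0) (δ := fun q => b * q 2 + x) (c := r)
      (fun q => by simp [hform.apply_unitriangular, add_assoc])
      (fun q => by simp [hform.apply_unitriangular]) (fun q => by simp [hvr q]) hn hnm _ _
  exact hb (by simpa using shear_const)

end Necessity

section Sufficiency

/-- The group of affine transformations that fix the `i`-th coordinate. -/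
def coordFixer (i : Fin 3) : Subgroup AffT where
  carrier := {γ | ∀ x, γ x i = x i}
  one_mem' _ := rfl
  mul_mem' hγ hδ x := (hγ _).trans (hδ x)
  inv_mem' {γ} hγ x := by
    rw [← hγ (γ⁻¹ x)]
    exact congrFun (γ.apply_symm_apply x) i

/-- `γ` translates the `i`-th coordinate by `c` and fixes the coordinates after it, like the
canonical generators of a polycyclic group of unitriangular affine maps; the coordinates before the
`i`-th may change arbitrarily. -/
structure IsLeadingShift (γ : AffT) (i : Fin 3) (c : ℝ) : Prop where
  apply_self (x : E3) : γ x i = x i + c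
  mem_coordFixer {j : Fin 3} (hij : i < j) : γ ∈ coordFixer j

theorem AffT.continuous (γ : AffT) : Continuous γ :=
  γ.toAffineMap.continuous_of_finiteDimensional

theorem isFreeAction_bot : IsFreeAction ⊥ := fun _ hγ _ => Subgroup.mem_bot.mp hγ

theorem isProperlyDiscontinuous_bot : IsProperlyDiscontinuous ⊥ := fun _ _ _ _ =>
  (Set.finite_singleton 1).subset fun _ hγ => Subgroup.mem_bot.mp hγ.1

theorem IsFreeAction.mono {Γ Λ : Subgroup AffT} (hΛ : IsFreeAction Λ) (hle : Γ ≤ Λ) :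
    IsFreeAction Γ := fun γ hγ => hΛ γ (hle hγ)

theorem IsProperlyDiscontinuous.mono {Γ Λ : Subgroup AffT} (hΛ : IsProperlyDiscontinuous Λ)
    (hle : Γ ≤ Λ) : IsProperlyDiscontinuous Γ := fun K L hK hL =>
  (hΛ K L hK hL).subset fun _ hγ => ⟨hle hγ.1, hγ.2⟩

section Extension

variable {N : Subgroup AffT} {u : AffT} {i : Fin 3} {c : ℝ}

theorem mul_zpow_apply_of_le_coordFixer (hNi : N ≤ coordFixer i) (hui : ∀ x, u x i = x i + c)
    {ν : AffT} (hν : ν ∈ N) (m : ℤ) (x : E3) : (ν * u ^ m) x i = x i + m * c :=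
  (hNi hν _).trans (zpow_apply_of_apply_eq_add hui m x)

theorem IsFreeAction.sup_zpowers (hN : IsFreeAction N) (hNi : N ≤ coordFixer i)
    (hu : u ∈ Subgroup.normalizer (N : Set AffT)) (hui : ∀ x, u x i = x i + c) (hc : c ≠ 0) :
    IsFreeAction (N ⊔ Subgroup.zpowers u) := by
  rintro γ hγ ⟨x, hx⟩
  obtain ⟨ν, hν, m, rfl⟩ := exists_eq_mul_zpow_of_mem_sup_zpowers hu hγ
  have hm : m = 0 := by
    simpa [hc, hx] using mul_zpow_apply_of_le_coordFixer hNi hui hν m x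
  subst hm
  rw [_root_.zpow_zero, mul_one] at hx ⊢
  exact hN ν hν ⟨x, hx⟩

theorem finite_setOf_add_int_mul_mem {K L : Set ℝ} (hK : IsCompact K) (hL : IsCompact L)
    (hc : c ≠ 0) : {m : ℤ | ∃ r ∈ K, r + m * c ∈ L}.Finite := by
  have quotients_compact : IsCompact ((· / c) '' (L - K)) :=
    (sub_eq_add_neg L K ▸ hL.add hK.neg).image (continuous_id.div_const c)
  refine (Int.isClosedEmbedding_coe_real.isCompact_preimage
    quotients_compact).finite_of_discrete.subset ?_
  rintro m ⟨r, hr, hrL⟩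
  exact ⟨_, Set.sub_mem_sub hrL hr, by simp [hc]⟩

theorem IsProperlyDiscontinuous.sup_zpowers (hN : IsProperlyDiscontinuous N)
    (hNi : N ≤ coordFixer i) (hu : u ∈ Subgroup.normalizer (N : Set AffT))
    (hui : ∀ x, u x i = x i + c) (hc : c ≠ 0) :
    IsProperlyDiscontinuous (N ⊔ Subgroup.zpowers u) := by
  intro K L hK hL
  have shifts_finite := finite_setOf_add_int_mul_mem (hK.image (continuous_apply i))
    (hL.image (continuous_apply i)) hc
  have coset_finite (m : ℤ) := hN _ L (hK.image (AffT.continuous (u ^ m))) hL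
  refine (shifts_finite.biUnion fun m _ => (coset_finite m).image (· * u ^ m)).subset ?_
  rintro γ ⟨hγ, _, ⟨x, hx, rfl⟩, hxL⟩
  obtain ⟨ν, hν, m, rfl⟩ := exists_eq_mul_zpow_of_mem_sup_zpowers hu hγ
  refine Set.mem_biUnion (x := m) ?_ ⟨ν, ⟨hν, _, ⟨_, ⟨x, hx, rfl⟩, rfl⟩, hxL⟩, rfl⟩
  exact ⟨x i, ⟨x, hx, rfl⟩, _, hxL, mul_zpow_apply_of_le_coordFixer hNi hui hν m x⟩

end Extension

section LeadingShifts

variable {τ h g : AffT} {d y z : ℝ}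

theorem isFreeAction_and_isProperlyDiscontinuous_of_isLeadingShift
    (hτ : IsLeadingShift τ 0 d) (hh : IsLeadingShift h 1 y) (hg : IsLeadingShift g 2 z)
    (hd : d ≠ 0) (hy : y ≠ 0) (hz : z ≠ 0) (hhτ : Commute h τ) (hgτ : Commute g τ)
    {j : ℤ} (hgh : ⁅g, h⁆ = τ ^ j) :
    let Λ := Subgroup.zpowers τ ⊔ Subgroup.zpowers h ⊔ Subgroup.zpowers g
    IsFreeAction Λ ∧ IsProperlyDiscontinuous Λ := by
  have τ_norm : τ ∈ Subgroup.normalizer ((⊥ : Subgroup AffT) : Set AffT) :=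
    Subgroup.normalizer_eq_top (H := (⊥ : Subgroup AffT)) ▸ Subgroup.mem_top τ
  have h_norm : h ∈ Subgroup.normalizer (Subgroup.zpowers τ : Set AffT) :=
    Subgroup.centralizer_le_normalizer _ <| Subgroup.mem_centralizer_iff.mpr <| by
      rintro _ ⟨k, rfl⟩
      exact (hhτ.zpow_right k).eq.symm
  have g_norm := mem_normalizer_zpowers_sup_zpowers hgτ hgh
  have fix_one : Subgroup.zpowers τ ≤ coordFixer 1 :=
    Subgroup.zpowers_le.mpr (hτ.mem_coordFixer (by decide))
  have fix_two : Subgroup.zpowers τ ⊔ Subgroup.zpowers h ≤ coordFixer 2 :=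
    sup_le (Subgroup.zpowers_le.mpr (hτ.mem_coordFixer (by decide)))
      (Subgroup.zpowers_le.mpr (hh.mem_coordFixer (by decide)))
  have free_τ : IsFreeAction (Subgroup.zpowers τ) := by
    simpa using isFreeAction_bot.sup_zpowers bot_le τ_norm hτ.apply_self hd
  have pd_τ : IsProperlyDiscontinuous (Subgroup.zpowers τ) := by
    simpa using isProperlyDiscontinuous_bot.sup_zpowers bot_le τ_norm hτ.apply_self hd
  exact ⟨(free_τ.sup_zpowers fix_one h_norm hh.apply_self hy).sup_zpowers
      fix_two g_norm hg.apply_self hz,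
    (pd_τ.sup_zpowers fix_one h_norm hh.apply_self hy).sup_zpowers
      fix_two g_norm hg.apply_self hz⟩

theorem exists_zpow_apply_mem_Icc {u : AffT} {i : Fin 3} {c : ℝ} (hu : ∀ x, u x i = x i + c)
    (hc : c ≠ 0) (x : E3) : ∃ m : ℤ, (u ^ m) x i ∈ Set.Icc (-|c|) |c| := by
  refine ⟨-⌊x i / c⌋, ?_⟩
  have hfract : (u ^ (-⌊x i / c⌋)) x i = Int.fract (x i / c) * c := by
    rw [zpow_apply_of_apply_eq_add hu, Int.fract]
    push_cast
    field_simp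
    ring
  rw [hfract, Set.mem_Icc, ← abs_le, abs_mul, Int.abs_fract]
  exact mul_le_of_le_one_left (abs_nonneg c) (Int.fract_lt_one _).le

theorem hasCompactQuotient_of_isCompact {Γ : Subgroup AffT} {B : Set E3} (hB : IsCompact B)
    (hΓB : ∀ x, ∃ γ ∈ Γ, γ x ∈ B) : HasCompactQuotient Γ := by
  have image_eq_univ : Quotient.mk (orbitSetoid Γ) '' B = Set.univ := by
    refine Set.eq_univ_of_forall (Quotient.ind fun x => ?_)
    obtain ⟨γ, hγ, hγB⟩ := hΓB x
    exact ⟨γ x, hγB, Quotient.sound ((orbitSetoid Γ).symm ⟨γ, hγ, rfl⟩)⟩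
  exact isCompact_univ_iff.mp (image_eq_univ ▸ hB.image continuous_quotient_mk')

theorem hasCompactQuotient_of_isLeadingShift {Γ : Subgroup AffT}
    (hτΓ : τ ∈ Γ) (hhΓ : h ∈ Γ) (hgΓ : g ∈ Γ)
    (hτ : IsLeadingShift τ 0 d) (hh : IsLeadingShift h 1 y) (hg : IsLeadingShift g 2 z)
    (hd : d ≠ 0) (hy : y ≠ 0) (hz : z ≠ 0) : HasCompactQuotient Γ := by
  refine hasCompactQuotient_of_isCompact (B := Set.Icc ![-|d|, -|y|, -|z|] ![|d|, |y|, |z|])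
    isCompact_Icc fun x => ?_
  obtain ⟨m, hm⟩ := exists_zpow_apply_mem_Icc hg.apply_self hz x
  obtain ⟨n, hn⟩ := exists_zpow_apply_mem_Icc hh.apply_self hy ((g ^ m) x)
  obtain ⟨k, hk⟩ := exists_zpow_apply_mem_Icc hτ.apply_self hd ((h ^ n) ((g ^ m) x))
  have τ_fix (i : Fin 3) (hi : 0 < i) (p : E3) : (τ ^ k) p i = p i :=
    zpow_mem (hτ.mem_coordFixer hi) k p
  have h_fix (p : E3) : (h ^ n) p 2 = p 2 := zpow_mem (hh.mem_coordFixer (by decide)) n p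
  rw [← τ_fix 1 (by decide) ((h ^ n) ((g ^ m) x))] at hn
  rw [← h_fix ((g ^ m) x), ← τ_fix 2 (by decide) ((h ^ n) ((g ^ m) x))] at hm
  refine ⟨τ ^ k * (h ^ n * g ^ m),
    mul_mem (zpow_mem hτΓ k) (mul_mem (zpow_mem hhΓ n) (zpow_mem hgΓ m)), ?_⟩
  simp only [Set.mem_Icc, Pi.le_def, Fin.forall_fin_succ]
  exact ⟨⟨hk.1, hn.1, hm.1, nofun⟩, ⟨hk.2, hn.2, hm.2, nofun⟩⟩

end LeadingShifts

end Sufficiency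

section Generators

variable {γ g h : AffT} {a b c a₁ b₁ c₁ b₂ x y z x₁ y₁ z₁ x₂ y₂ z₂ d : ℝ}

theorem HasForm.isLeadingShift_two (hγ : HasForm γ !![1, a, b; 0, 1, c; 0, 0, 1] ![x, y, z]) :
    IsLeadingShift γ 2 z where
  apply_self p := by simp [hγ.apply_unitriangular]
  mem_coordFixer {j} hj := absurd hj (Fin.le_last j).not_gt

theorem HasForm.isLeadingShift_one (hγ : HasForm γ !![1, a, b; 0, 1, 0; 0, 0, 1] ![x, y, 0]) :
    IsLeadingShift γ 1 y where
  apply_self p := by simp [hγ.apply_unitriangular]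
  mem_coordFixer {j} hj p := by
    obtain rfl : j = 2 := by omega
    simp [hγ.apply_unitriangular]

theorem IsTranslationBy.isLeadingShift_zero (hγ : IsTranslationBy γ ![d, 0, 0]) :
    IsLeadingShift γ 0 d where
  apply_self p := by simp [hγ p]
  mem_coordFixer {j} hj p := by
    fin_cases j <;> simp_all [hγ p]

theorem isTranslationBy_commutatorElement
    (hg : HasForm g !![1, a₁, b₁; 0, 1, c₁; 0, 0, 1] ![x₁, y₁, z₁])
    (hh : HasForm h !![1, 0, b₂; 0, 1, 0; 0, 0, 1] ![x₂, y₂, z₂]) :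
    IsTranslationBy ⁅g, h⁆ ![a₁ * y₂ + b₁ * z₂ - b₂ * z₁, c₁ * z₂, 0] := by
  have hgh (p : E3) :
      g (h p) = ![a₁ * y₂ + b₁ * z₂ - b₂ * z₁, c₁ * z₂, 0] +ᵥ h (g p) := by
    ext i
    fin_cases i <;> simp [hg.apply_unitriangular, hh.apply_unitriangular] <;> ring
  intro p
  rw [commutatorElement_eq_constVAdd hgh, AffineEquiv.constVAdd_apply, vadd_eq_add, add_comm]

theorem exists_common_divisor_of_div_eq_ratCast {s x : ℝ} {q : ℚ} (hx : x ≠ 0)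
    (hq : s / x = q) : ∃ d : ℝ, d ≠ 0 ∧ ∃ m n : ℤ, s = m * d ∧ x = n * d := by
  have hden : (q.den : ℝ) ≠ 0 := Nat.cast_ne_zero.mpr q.den_ne_zero
  refine ⟨x / q.den, div_ne_zero hx hden, q.num, q.den, ?_, ?_⟩
  · rw [div_eq_iff hx, Rat.cast_def] at hq
    rw [hq]
    ring
  · rw [Int.cast_natCast, mul_div_cancel₀ _ hden]

theorem isFreeAction_and_isProperlyDiscontinuous_closure {t : AffT} {r : ℝ} {q : ℚ}
    (hg : HasForm g !![1, a₁, b₁; 0, 1, c₁; 0, 0, 1] ![x₁, y₁, z₁])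
    (hh : HasForm h !![1, 0, b₂; 0, 1, 0; 0, 0, 1] ![x₂, y₂, 0])
    (ht : IsTranslationBy t ![r, 0, 0]) (hz₁ : z₁ ≠ 0) (hy₂ : y₂ ≠ 0) (hr : r ≠ 0)
    (hq : (a₁ * y₂ - b₂ * z₁) / r = q) :
    IsFreeAction (Subgroup.closure {g, h, t}) ∧
      IsProperlyDiscontinuous (Subgroup.closure {g, h, t}) := by
  obtain ⟨d, hd, m, n, hm, hn⟩ := exists_common_divisor_of_div_eq_ratCast hr hq
  let τ : AffT := AffineEquiv.constVAdd ℝ E3 ![d, 0, 0]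
  have hτ : IsTranslationBy τ ![d, 0, 0] := fun p => add_comm _ p
  have zpow_τ (k : ℤ) : τ ^ k = AffineEquiv.constVAdd ℝ E3 ![k * d, 0, 0] := by
    simp [τ, ← AffineEquiv.constVAdd_zsmul]
  have t_eq : t = τ ^ n := by rw [zpow_τ, ht.eq_constVAdd, hn]
  have gh_eq : ⁅g, h⁆ = τ ^ m := by
    rw [zpow_τ, (isTranslationBy_commutatorElement hg hh).eq_constVAdd, ← hm]
    simp
  obtain ⟨hfree, hpd⟩ := isFreeAction_and_isProperlyDiscontinuous_of_isLeadingShift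
    hτ.isLeadingShift_zero hh.isLeadingShift_one hg.isLeadingShift_two hd hy₂ hz₁
    (commute_constVAdd_of_linear_eq (hh.linear_unitriangular d))
    (commute_constVAdd_of_linear_eq (hg.linear_unitriangular d)) gh_eq
  have hle : Subgroup.closure {g, h, t} ≤
      Subgroup.zpowers τ ⊔ Subgroup.zpowers h ⊔ Subgroup.zpowers g := by
    rw [Subgroup.closure_le]
    rintro _ (rfl | rfl | rfl)
    · exact Subgroup.mem_sup_right (Subgroup.mem_zpowers _)
    · exact Subgroup.mem_sup_left (Subgroup.mem_sup_right (Subgroup.mem_zpowers _))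
    · exact Subgroup.mem_sup_left (Subgroup.mem_sup_left ⟨n, t_eq.symm⟩)
  exact ⟨hfree.mono hle, hpd.mono hle⟩

end Generators

theorem stmt_8_general {a₁ b₁ c₁ b₂ x₁ y₁ z₁ x₂ y₂ z₂ x₃ : ℝ} (hb₂ : b₂ ≠ 0) (hc₁ : c₁ ≠ 0)
    (hx₃ : x₃ ≠ 0) {g h t : AffT}
    (hg : HasForm g !![1, a₁, b₁; 0, 1, c₁; 0, 0, 1] ![x₁, y₁, z₁])
    (hh : HasForm h !![1, 0, b₂; 0, 1, 0; 0, 0, 1] ![x₂, y₂, z₂])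
    (ht : IsTranslationBy t ![x₃, 0, 0])
    {Γ : Subgroup AffT} (hΓ : Γ = Subgroup.closure {g, h, t})
    (hrk : ∀ γ ∈ Γ, ∀ w : E3, IsTranslationBy γ w → ∃ r : ℝ, w = r • ![x₃, 0, 0]) :
    (IsProperlyDiscontinuous Γ ↔
      z₂ = 0 ∧ z₁ * y₂ * x₃ ≠ 0 ∧ ∃ q : ℚ, (a₁ * y₂ - b₂ * z₁) / x₃ = (q : ℝ)) ∧
    (IsProperlyDiscontinuous Γ → IsFreeAction Γ ∧ HasCompactQuotient Γ) := by
  have hgΓ : g ∈ Γ := hΓ ▸ Subgroup.subset_closure (by simp)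
  have hhΓ : h ∈ Γ := hΓ ▸ Subgroup.subset_closure (by simp)
  have htΓ : t ∈ Γ := hΓ ▸ Subgroup.subset_closure (by simp)
  have hghΓ : ⁅g, h⁆ ∈ Γ :=
    mul_mem (mul_mem (mul_mem hgΓ hhΓ) (inv_mem hgΓ)) (inv_mem hhΓ)
  have hgh := isTranslationBy_commutatorElement hg hh
  obtain rfl : z₂ = 0 := by
    obtain ⟨r, hr⟩ := hrk _ hghΓ _ hgh
    simpa [hc₁] using congrFun hr 1
  have necessity (hpd : IsProperlyDiscontinuous Γ) :
      z₁ ≠ 0 ∧ y₂ ≠ 0 ∧ ∃ q : ℚ, (a₁ * y₂ - b₂ * z₁) / x₃ = (q : ℝ) :=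
    ⟨hpd.z_shift_ne_zero hgΓ htΓ hc₁ hx₃ hg ht, hpd.y_shift_ne_zero hhΓ htΓ hb₂ hx₃ hh ht,
      hpd.exists_rat_eq_div hghΓ htΓ hx₃ (by simpa using hgh) ht⟩
  refine ⟨⟨fun hpd => ?_, fun ⟨_, hne, _, hq⟩ => ?_⟩, fun hpd => ?_⟩
  · obtain ⟨hz₁, hy₂, hq⟩ := necessity hpd
    exact ⟨rfl, by simp [*], hq⟩
  · obtain ⟨⟨hz₁, hy₂⟩, -⟩ : (z₁ ≠ 0 ∧ y₂ ≠ 0) ∧ x₃ ≠ 0 := by simpa [not_or] using hne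
    exact hΓ ▸ (isFreeAction_and_isProperlyDiscontinuous_closure hg hh ht hz₁ hy₂ hx₃ hq).2
  · obtain ⟨hz₁, hy₂, _, hq⟩ := necessity hpd
    exact ⟨hΓ ▸ (isFreeAction_and_isProperlyDiscontinuous_closure hg hh ht hz₁ hy₂ hx₃ hq).1,
      hasCompactQuotient_of_isLeadingShift htΓ hhΓ hgΓ ht.isLeadingShift_zero
        hh.isLeadingShift_one hg.isLeadingShift_two hx₃ hy₂ hz₁⟩

/-- rank-one translation subgroup, `c₂ = 0` case. -/
theorem stmt_8 (a₁ b₂ c₁ : ℤ) (ha₁ : a₁ ≠ 0) (hb₂ : b₂ ≠ 0) (hc₁ : c₁ ≠ 0) (b₁ : ℤ)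
    (z₁ x₂ y₂ z₂ x₃ : ℝ) (hx₃ : x₃ ≠ 0)
    (g h t : AffT)
    (hg : HasForm g !![1, (a₁ : ℝ), (b₁ : ℝ); 0, 1, (c₁ : ℝ); 0, 0, 1] ![0, 0, z₁])
    (hh : HasForm h !![1, 0, (b₂ : ℝ); 0, 1, 0; 0, 0, 1] ![x₂, y₂, z₂])
    (ht : IsTranslationBy t ![x₃, 0, 0])
    (Γ : Subgroup AffT) (hΓ : Γ = Subgroup.closure {g, h, t})
    (hrk : ∀ γ ∈ Γ, ∀ w : E3, IsTranslationBy γ w → ∃ r : ℝ, w = r • ![x₃, 0, 0]) :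
    ((IsFreeAction Γ ∧ IsProperlyDiscontinuous Γ) ↔
      (z₂ = 0 ∧ z₁ * y₂ * x₃ ≠ 0 ∧
        ∃ q : ℚ, ((a₁ : ℝ) * y₂ - (b₂ : ℝ) * z₁) / x₃ = (q : ℝ))) ∧
    (IsFreeAction Γ ∧ IsProperlyDiscontinuous Γ → HasCompactQuotient Γ) := by
  obtain ⟨hiff, hfree_compact⟩ := stmt_8_general (Int.cast_ne_zero.mpr hb₂)
    (Int.cast_ne_zero.mpr hc₁) hx₃ hg hh ht hΓ hrk
  exact ⟨⟨fun hyp => hiff.1 hyp.2, fun hcond => ⟨(hfree_compact (hiff.2 hcond)).1, hiff.2 hcond⟩⟩,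
    fun hyp => (hfree_compact hyp.2).2⟩
end
end

section
/- Let a₁, c₁, c₂ be nonzero integers, b₁, b₂ ∈ ℤ, z₁, x₂, y₂, z₂, x₃ ∈ ℝ with x₃ ≠ 0, and let Γ be the group of affine transformations of ℝ³ generated by g = ([[1,a₁,b₁],[0,1,c₁],[0,0,1]], (0,0,z₁)), h = ([[1,0,b₂],[0,1,c₂],[0,0,1]], (x₂,y₂,z₂)) and the pure translation t = (I, (x₃,0,0)). Assume that the translation subgroup of Γ has rank 1, i.e., the vector part of every pure translation belonging to Γ is a real multiple of (x₃,0,0). Then the action of Γ on ℝ³ is not both free and properly discontinuous. -/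
/-!
Write an affine map of `ℝ³` with unitriangular linear part as a unitriangular `4 × 4` matrix. Its
superdiagonal `(a, c, z)` is additive under products, and commutators move up the diagonals. So for
`g, h` with superdiagonals `(aᵢ, cᵢ, zᵢ)` the commutator `k = ⁅g, h⁆` has second diagonal `(b, d)`
with `b = a₁ c₂ - a₂ c₁` and `d = c₁ z₂ - c₂ z₁`, and `⁅g, k⁆`, `⁅h, k⁆` are translations along the
first axis by `a₁ d - b z₁` and `a₂ d - b z₂`. Suppose `b ≠ 0` and the action is free and properly
discontinuous. Freeness forces `d ≠ 0`, since otherwise `k` has a fixed point; hence the two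
translations are not both trivial. Proper discontinuity makes them commensurable. As the `aᵢ`, `cᵢ`
are integers, this amounts to an integral relation `P z₁ + Q z₂ = 0`, and `g ^ P * h ^ Q` then has
superdiagonal `(*, C, 0)` with `C ≠ 0`. Such a map translates a line parallel to the first axis, so
a nontrivial power of it agrees on that line, and by freeness everywhere, with a translation. But a
translation has `C = 0`.
-/

open Matrix

noncomputable section

open scoped commutatorElement

/-- The upper unitriangular `3 × 3` matrix with rows `(1, a, b)`, `(0, 1, c)`, `(0, 0, 1)`. -/
def upperUnitriangular (a b c : ℝ) : Matrix (Fin 3) (Fin 3) ℝ :=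
  !![1, a, b; 0, 1, c; 0, 0, 1]

theorem upperUnitriangular_zero : upperUnitriangular 0 0 0 = 1 := by
  ext i j
  fin_cases i <;> fin_cases j <;> rfl

theorem upperUnitriangular_mul (a b c a' b' c' : ℝ) :
    upperUnitriangular a b c * upperUnitriangular a' b' c' =
      upperUnitriangular (a + a') (b + b' + a * c') (c + c') := by
  ext i j
  fin_cases i <;> fin_cases j <;>
    simp [upperUnitriangular, Matrix.mul_apply, Fin.sum_univ_three] <;> ring

theorem upperUnitriangular_mulVec (a b c x y z : ℝ) :
    upperUnitriangular a b c *ᵥ ![x, y, z] = ![x + a * y + b * z, y + c * z, z] := by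
  ext i
  fin_cases i <;> simp [upperUnitriangular, Matrix.mulVec, dotProduct, Fin.sum_univ_three]

namespace HasForm

variable {γ δ : AffT} {A B : Matrix (Fin 3) (Fin 3) ℝ} {v w : E3}

theorem one : HasForm 1 1 0 := fun x => by simp

theorem mul (hγ : HasForm γ A v) (hδ : HasForm δ B w) :
    HasForm (γ * δ) (A * B) (A *ᵥ w + v) := fun x => by
  rw [AffineEquiv.mul_def, AffineEquiv.trans_apply, hδ, hγ, Matrix.mulVec_add,
    Matrix.mulVec_mulVec, add_assoc]

theorem mul_inv (hγ : HasForm γ (A * B) (A *ᵥ w + v)) (hδ : HasForm δ B w) :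
    HasForm (γ * δ⁻¹) A v := fun x => by
  obtain ⟨y, rfl⟩ := δ.surjective x
  have cancel : (γ * δ⁻¹) (δ y) = γ y := congrArg γ (δ.symm_apply_apply y)
  rw [cancel, hγ, hδ, Matrix.mulVec_add, Matrix.mulVec_mulVec, add_assoc]

theorem commutator (hγδ : HasForm (γ * δ) (A * B) (A *ᵥ w + v)) (hδγ : HasForm (δ * γ) B w) :
    HasForm ⁅γ, δ⁆ A v := by
  rw [show ⁅γ, δ⁆ = γ * δ * (δ * γ)⁻¹ by group]
  exact hγδ.mul_inv hδγ

theorem unique (h : HasForm γ A v) (h' : HasForm γ B w) : A = B ∧ v = w := by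
  have hvw : v = w := by simpa [h 0] using h' 0
  refine ⟨Matrix.mulVec_injective (funext fun x => ?_), hvw⟩
  simpa [h x, hvw] using h' x

end HasForm

theorem isTranslationBy_iff_hasForm_one {γ : AffT} {v : E3} :
    IsTranslationBy γ v ↔ HasForm γ 1 v := by
  simp only [IsTranslationBy, HasForm, Matrix.one_mulVec]

/-- `γ` has an upper unitriangular augmented `4 × 4` matrix `[A v; 0 1]` with superdiagonal
`(a, c, z)`. These are the coordinates on the abelianization of the unitriangular group; the entries
above the superdiagonal are left unspecified. -/
def HasSuperdiagonal (γ : AffT) (a c z : ℝ) : Prop :=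
  ∃ b x y : ℝ, HasForm γ (upperUnitriangular a b c) ![x, y, z]

namespace HasSuperdiagonal

variable {γ δ : AffT} {a c z a' c' z' : ℝ}

theorem one : HasSuperdiagonal 1 0 0 0 := by
  refine ⟨0, 0, 0, ?_⟩
  rw [upperUnitriangular_zero]
  convert HasForm.one
  simp

theorem mul (hγ : HasSuperdiagonal γ a c z) (hδ : HasSuperdiagonal δ a' c' z') :
    HasSuperdiagonal (γ * δ) (a + a') (c + c') (z + z') := by
  obtain ⟨b, x, y, hγ⟩ := hγ
  obtain ⟨b', x', y', hδ⟩ := hδ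
  have h := hγ.mul hδ
  rw [upperUnitriangular_mul, upperUnitriangular_mulVec] at h
  exact ⟨_, _, _, by simpa [add_comm] using h⟩

theorem inv (hγ : HasSuperdiagonal γ a c z) : HasSuperdiagonal γ⁻¹ (-a) (-c) (-z) := by
  obtain ⟨b, x, y, hγ⟩ := hγ
  refine ⟨a * c - b, -x + a * y - (a * c - b) * z, -y + c * z, ?_⟩
  rw [← one_mul γ⁻¹]
  refine HasForm.mul_inv ?_ hγ
  rw [upperUnitriangular_mul, upperUnitriangular_mulVec]
  convert HasForm.one using 1
  · rw [← upperUnitriangular_zero]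
    congr 1 <;> ring
  · ext i
    fin_cases i <;> simp <;> ring

theorem zpow (hγ : HasSuperdiagonal γ a c z) (n : ℤ) :
    HasSuperdiagonal (γ ^ n) (n * a) (n * c) (n * z) := by
  induction n with
  | zero => simpa using one
  | succ k ih =>
    rw [_root_.zpow_add_one]
    convert ih.mul hγ using 1 <;> push_cast <;> ring
  | pred k ih =>
    rw [_root_.zpow_sub_one]
    convert ih.mul hγ.inv using 1 <;> push_cast <;> ring

theorem snd_unique (h : HasSuperdiagonal γ a c z) (h' : HasSuperdiagonal γ a' c' z') :
    c = c' := by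
  obtain ⟨b, x, y, h⟩ := h
  obtain ⟨b', x', y', h'⟩ := h'
  simpa [upperUnitriangular] using congrFun₂ (h.unique h').1 1 2

theorem exists_hasForm_commutator (hγ : HasSuperdiagonal γ a c z)
    (hδ : HasSuperdiagonal δ a' c' z') :
    ∃ x, HasForm ⁅γ, δ⁆ (upperUnitriangular 0 (a * c' - a' * c) 0) ![x, c * z' - c' * z, 0] := by
  obtain ⟨b, x, y, hγ⟩ := hγ
  obtain ⟨b', x', y', hδ⟩ := hδ
  have hγδ := hγ.mul hδ
  have hδγ := hδ.mul hγ
  rw [upperUnitriangular_mul, upperUnitriangular_mulVec] at hγδ hδγ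
  refine ⟨a * y' + b * z' - a' * y - b' * z - (a * c' - a' * c) * (z + z'), ?_⟩
  refine HasForm.commutator ?_ hδγ
  rw [upperUnitriangular_mul]
  convert hγδ using 1
  · congr 1 <;> ring
  · ext i
    fin_cases i <;> simp [upperUnitriangular_mulVec] <;> ring

theorem isTranslationBy_commutator {b x y : ℝ} (hγ : HasSuperdiagonal γ a c z)
    (hδ : HasForm δ (upperUnitriangular 0 b 0) ![x, y, 0]) :
    IsTranslationBy ⁅γ, δ⁆ ((a * y - b * z) • ![1, 0, 0]) := by
  obtain ⟨b', x', y', hγ⟩ := hγ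
  have hγδ := hγ.mul hδ
  have hδγ := hδ.mul hγ
  rw [upperUnitriangular_mul, upperUnitriangular_mulVec] at hγδ hδγ
  rw [isTranslationBy_iff_hasForm_one]
  refine HasForm.commutator ?_ hδγ
  rw [Matrix.one_mul, Matrix.one_mulVec]
  convert hγδ using 1
  · congr 1 <;> ring
  · ext i
    fin_cases i <;> simp <;> ring

end HasSuperdiagonal

theorem IsTranslationBy.hasSuperdiagonal {γ : AffT} {v : E3} (h : IsTranslationBy γ v) :
    HasSuperdiagonal γ 0 0 (v 2) := by
  refine ⟨0, v 0, v 1, ?_⟩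
  rw [upperUnitriangular_zero, show ![v 0, v 1, v 2] = v from (FinVec.etaExpand_eq v)]
  exact isTranslationBy_iff_hasForm_one.1 h

/-- `γ` maps the line `p + ℝ w` to itself and acts on its parameter as the shift by `e`. -/
def TranslatesLine (γ : AffT) (p w : E3) (e : ℝ) : Prop :=
  ∀ r : ℝ, γ (p + r • w) = p + (r + e) • w

namespace TranslatesLine

variable {γ δ : AffT} {p w : E3} {e e' : ℝ}

theorem mul (hγ : TranslatesLine γ p w e) (hδ : TranslatesLine δ p w e') :
    TranslatesLine (γ * δ) p w (e + e') := fun r => by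
  rw [AffineEquiv.mul_def, AffineEquiv.trans_apply, hδ, hγ, add_assoc, add_comm e']

theorem inv (hγ : TranslatesLine γ p w e) : TranslatesLine γ⁻¹ p w (-e) := fun r => by
  refine γ.injective ((γ.apply_symm_apply _).trans ?_)
  rw [hγ, neg_add_cancel_right]

theorem zpow (hγ : TranslatesLine γ p w e) (n : ℤ) : TranslatesLine (γ ^ n) p w (n * e) := by
  induction n with
  | zero => simp [TranslatesLine]
  | succ k ih =>
    rw [_root_.zpow_add_one]
    convert ih.mul hγ using 1
    push_cast
    ring
  | pred k ih =>
    rw [_root_.zpow_sub_one]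
    convert ih.mul hγ.inv using 1
    push_cast
    ring

theorem apply_base (hγ : TranslatesLine γ p w e) : γ p = p + e • w := by
  simpa using hγ 0

end TranslatesLine

theorem IsTranslationBy.translatesLine {γ : AffT} {w : E3} {e : ℝ}
    (h : IsTranslationBy γ (e • w)) (p : E3) : TranslatesLine γ p w e := fun r => by
  rw [h, add_smul, add_assoc]

theorem HasSuperdiagonal.exists_translatesLine {γ : AffT} {a c : ℝ}
    (h : HasSuperdiagonal γ a c 0) (hc : c ≠ 0) :
    ∃ p e, TranslatesLine γ p ![1, 0, 0] e := by
  obtain ⟨b, x, y, h⟩ := h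
  refine ⟨![0, 0, -y / c], b * (-y / c) + x, fun r => ?_⟩
  rw [h, show (![0, 0, -y / c] : E3) + r • ![1, 0, 0] = ![r, 0, -y / c] by simp,
    upperUnitriangular_mulVec]
  ext i
  fin_cases i <;> simp <;> field_simp <;> ring

namespace IsProperlyDiscontinuous

variable {Γ : Subgroup AffT}

theorem exists_ne_map_eq (hΓ : IsProperlyDiscontinuous Γ) {ι : Type*} [Infinite ι] {F : ι → AffT}
    (hF : ∀ i, F i ∈ Γ) {p : E3} {L : Set E3} (hL : IsCompact L) (hFL : ∀ i, F i p ∈ L) :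
    ∃ i j, i ≠ j ∧ F i = F j := by
  have hfin := hΓ {p} L isCompact_singleton hL
  have hmem (i : ι) : F i ∈ {γ : AffT | γ ∈ Γ ∧ ((γ '' {p}) ∩ L).Nonempty} :=
    ⟨hF i, F i p, ⟨p, rfl, rfl⟩, hFL i⟩
  by_contra! hinj
  exact Set.infinite_of_injective_forall_mem
    (fun i j hij => by_contra fun hne => hinj i j hne hij) hmem hfin

theorem exists_int_mul_eq_int_mul (hΓ : IsProperlyDiscontinuous Γ) {u t : AffT} (hu : u ∈ Γ)
    (ht : t ∈ Γ) {p w : E3} (hw : w ≠ 0) {e x : ℝ} (hx : x ≠ 0) (hue : TranslatesLine u p w e)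
    (htx : TranslatesLine t p w x) : ∃ n m : ℤ, n ≠ 0 ∧ n * e = m * x := by
  -- The power of `t` brings `u ^ n p` back to the segment of parameters between `0` and `x`.
  let F (n : ℤ) : AffT := u ^ n * t ^ (-⌊n * e / x⌋)
  have hFp (n : ℤ) : F n p = p + (Int.fract (n * e / x) * x) • w := by
    rw [((hue.zpow n).mul (htx.zpow _)).apply_base, Int.fract]
    push_cast
    field_simp
    ring_nf
  have hF (n : ℤ) : F n ∈ Γ := Γ.mul_mem (Γ.zpow_mem hu _) (Γ.zpow_mem ht _)
  have hL : IsCompact ((fun s : ℝ => p + (s * x) • w) '' Set.Icc 0 1) :=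
    isCompact_Icc.image (by fun_prop)
  obtain ⟨n, n', hne, heq⟩ := hΓ.exists_ne_map_eq hF hL fun n =>
    ⟨_, ⟨Int.fract_nonneg _, (Int.fract_lt_one _).le⟩, (hFp n).symm⟩
  have hfract : Int.fract (n * e / x) = Int.fract (n' * e / x) := by
    have hp : F n p = F n' p := by rw [heq]
    rw [hFp, hFp] at hp
    exact mul_right_cancel₀ hx (smul_left_injective ℝ hw (add_left_cancel hp))
  obtain ⟨m, hm⟩ := Int.fract_eq_fract.1 hfract
  refine ⟨n - n', m, sub_ne_zero.2 hne, ?_⟩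
  push_cast
  field_simp at hm
  linear_combination hm

theorem exists_int_relation (hΓ : IsProperlyDiscontinuous Γ) {u t : AffT} (hu : u ∈ Γ)
    (ht : t ∈ Γ) {p w : E3} (hw : w ≠ 0) {e x : ℝ} (hue : TranslatesLine u p w e)
    (htx : TranslatesLine t p w x) : ∃ n m : ℤ, (n ≠ 0 ∨ m ≠ 0) ∧ n * e + m * x = 0 := by
  rcases eq_or_ne x 0 with rfl | hx
  · exact ⟨0, 1, Or.inr one_ne_zero, by simp⟩
  · obtain ⟨n, m, hn, hnm⟩ := hΓ.exists_int_mul_eq_int_mul hu ht hw hx hue htx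
    exact ⟨n, -m, Or.inl hn, by push_cast; linear_combination hnm⟩

theorem exists_zpow_eq_zpow_s9 (hΓ : IsProperlyDiscontinuous Γ) (hfree : IsFreeAction Γ) {u t : AffT}
    (hu : u ∈ Γ) (ht : t ∈ Γ) {p w : E3} (hw : w ≠ 0) {e x : ℝ} (hx : x ≠ 0)
    (hue : TranslatesLine u p w e) (htx : TranslatesLine t p w x) :
    ∃ n m : ℤ, n ≠ 0 ∧ u ^ n = t ^ m := by
  obtain ⟨n, m, hn, hnm⟩ := hΓ.exists_int_mul_eq_int_mul hu ht hw hx hue htx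
  have hfix : (u ^ n * (t ^ m)⁻¹) p = p := by
    rw [((hue.zpow n).mul (htx.zpow m).inv).apply_base, hnm, add_neg_cancel, zero_smul, add_zero]
  exact ⟨n, m, hn, mul_inv_eq_one.1 <|
    hfree _ (Γ.mul_mem (Γ.zpow_mem hu n) (Γ.inv_mem (Γ.zpow_mem ht m))) ⟨p, hfix⟩⟩

theorem snd_superdiagonal_eq_zero (hΓ : IsProperlyDiscontinuous Γ) (hfree : IsFreeAction Γ)
    {t u : AffT} (ht : t ∈ Γ) {x : ℝ} (hx : x ≠ 0) (htx : IsTranslationBy t (x • ![1, 0, 0]))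
    (hu : u ∈ Γ) {a c : ℝ} (hu' : HasSuperdiagonal u a c 0) : c = 0 := by
  by_contra hc
  obtain ⟨p, e, hue⟩ := hu'.exists_translatesLine hc
  obtain ⟨n, m, hn, hnm⟩ := hΓ.exists_zpow_eq_zpow_s9 hfree hu ht (by simp) hx hue
    (htx.translatesLine p)
  have hun := hu'.zpow n
  rw [hnm] at hun
  have hnc : (n : ℝ) * c = m * 0 := hun.snd_unique (htx.hasSuperdiagonal.zpow m)
  simp [hn, hc] at hnc

end IsProperlyDiscontinuous

theorem IsFreeAction.ne_zero_of_hasForm {Γ : Subgroup AffT} (hfree : IsFreeAction Γ) {k : AffT}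
    (hk : k ∈ Γ) {b x y : ℝ} (hform : HasForm k (upperUnitriangular 0 b 0) ![x, y, 0])
    (hb : b ≠ 0) : y ≠ 0 := by
  rintro rfl
  have hfix : k ![0, 0, -x / b] = ![0, 0, -x / b] := by
    rw [hform, upperUnitriangular_mulVec]
    simp [mul_div_cancel₀, hb]
  have hk1 : HasForm 1 (upperUnitriangular 0 b 0) ![x, 0, 0] := hfree k hk ⟨_, hfix⟩ ▸ hform
  exact hb (by simpa [upperUnitriangular] using congrFun₂ (hk1.unique HasForm.one).1 0 2)

theorem exists_int_relation_of_commutator_relation {a₁ a₂ c₁ c₂ : ℤ} {z₁ z₂ : ℝ}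
    (hb : a₁ * c₂ - a₂ * c₁ ≠ 0) (hd : c₁ * z₂ - c₂ * z₁ ≠ 0) {n m : ℤ} (hnm : n ≠ 0 ∨ m ≠ 0)
    (hrel : n * (a₁ * (c₁ * z₂ - c₂ * z₁) - (a₁ * c₂ - a₂ * c₁) * z₁) +
      m * (a₂ * (c₁ * z₂ - c₂ * z₁) - (a₁ * c₂ - a₂ * c₁) * z₂) = 0) :
    ∃ P Q : ℤ, P * z₁ + Q * z₂ = 0 ∧ (P * c₁ + Q * c₂ : ℝ) ≠ 0 := by
  -- With these `P` and `Q`, collecting the `zᵢ` turns `hrel` into `P z₁ + Q z₂ = 0`.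
  set A := n * a₁ + m * a₂ with hA
  set b := a₁ * c₂ - a₂ * c₁ with hb_def
  set P := A * c₂ + b * n with hP
  set Q := b * m - A * c₁ with hQ
  have hz : (P * z₁ + Q * z₂ : ℝ) = 0 := by
    simp only [hP, hQ, hA, hb_def]
    push_cast
    linear_combination -hrel
  refine ⟨P, Q, hz, fun hc => ?_⟩
  have hP0 : P = 0 := by
    have : (P * (c₁ * z₂ - c₂ * z₁) : ℝ) = 0 := by linear_combination z₂ * hc - c₂ * hz
    exact_mod_cast (mul_eq_zero.1 this).resolve_right hd
  have hQ0 : Q = 0 := by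
    have : (Q * (c₁ * z₂ - c₂ * z₁) : ℝ) = 0 := by linear_combination c₁ * hz - z₁ * hc
    exact_mod_cast (mul_eq_zero.1 this).resolve_right hd
  have hA0 : A = 0 := by
    have : 2 * b * A = 0 := by linear_combination a₁ * hP0 + a₂ * hQ0
    simpa [hb] using this
  have hn : n = 0 := by simpa [hA0, hb] using hP.symm.trans hP0
  have hm : m = 0 := by simpa [hA0, hb] using hQ.symm.trans hQ0
  exact hnm.elim (· hn) (· hm)

theorem stmt_9_general {a₁ a₂ c₁ c₂ : ℤ} {z₁ z₂ : ℝ} (hb : a₁ * c₂ - a₂ * c₁ ≠ 0) {g h : AffT}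
    (hg : HasSuperdiagonal g a₁ c₁ z₁) (hh : HasSuperdiagonal h a₂ c₂ z₂) {Γ : Subgroup AffT}
    (hgΓ : g ∈ Γ) (hhΓ : h ∈ Γ) : ¬ (IsFreeAction Γ ∧ IsProperlyDiscontinuous Γ) := by
  rintro ⟨hfree, hpd⟩
  have hbR : (a₁ * c₂ - a₂ * c₁ : ℝ) ≠ 0 := by exact_mod_cast hb
  have comm_mem {γ δ : AffT} (hγ : γ ∈ Γ) (hδ : δ ∈ Γ) : ⁅γ, δ⁆ ∈ Γ :=
    Γ.commutator_le_self (Subgroup.commutator_mem_commutator hγ hδ)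
  obtain ⟨x, hk⟩ := hg.exists_hasForm_commutator hh
  have hkΓ := comm_mem hgΓ hhΓ
  have hd : (c₁ * z₂ - c₂ * z₁ : ℝ) ≠ 0 := hfree.ne_zero_of_hasForm hkΓ hk hbR
  have htg := hg.isTranslationBy_commutator hk
  have hth := hh.isTranslationBy_commutator hk
  have htgΓ := comm_mem hgΓ hkΓ
  have hthΓ := comm_mem hhΓ hkΓ
  obtain ⟨n, m, hnm, hrel⟩ := hpd.exists_int_relation htgΓ hthΓ (by simp)
    (htg.translatesLine 0) (hth.translatesLine 0)
  obtain ⟨P, Q, hz, hc⟩ := exists_int_relation_of_commutator_relation hb hd hnm hrel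
  have hu := (hg.zpow P).mul (hh.zpow Q)
  rw [hz] at hu
  have huΓ := Γ.mul_mem (Γ.zpow_mem hgΓ P) (Γ.zpow_mem hhΓ Q)
  by_cases hτg : a₁ * (c₁ * z₂ - c₂ * z₁) - (a₁ * c₂ - a₂ * c₁) * z₁ = 0
  · refine hc (hpd.snd_superdiagonal_eq_zero hfree hthΓ (fun hτh => ?_) hth huΓ hu)
    exact mul_ne_zero (mul_ne_zero two_ne_zero hbR) hd (by linear_combination c₂ * hτg - c₁ * hτh)
  · exact hc (hpd.snd_superdiagonal_eq_zero hfree htgΓ hτg htg huΓ hu)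

/-- rank-one translation subgroup, `c₂ ≠ 0` case is impossible. -/
theorem stmt_9 (a₁ c₁ c₂ : ℤ) (ha₁ : a₁ ≠ 0) (hc₁ : c₁ ≠ 0) (hc₂ : c₂ ≠ 0) (b₁ b₂ : ℤ)
    (z₁ x₂ y₂ z₂ x₃ : ℝ) (hx₃ : x₃ ≠ 0)
    (g h t : AffT)
    (hg : HasForm g !![1, (a₁ : ℝ), (b₁ : ℝ); 0, 1, (c₁ : ℝ); 0, 0, 1] ![0, 0, z₁])
    (hh : HasForm h !![1, 0, (b₂ : ℝ); 0, 1, (c₂ : ℝ); 0, 0, 1] ![x₂, y₂, z₂])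
    (ht : IsTranslationBy t ![x₃, 0, 0])
    (Γ : Subgroup AffT) (hΓ : Γ = Subgroup.closure {g, h, t})
    (hrk : ∀ γ ∈ Γ, ∀ w : E3, IsTranslationBy γ w → ∃ r : ℝ, w = r • ![x₃, 0, 0]) :
    ¬ (IsFreeAction Γ ∧ IsProperlyDiscontinuous Γ) := by
  have hh' : HasSuperdiagonal h (0 : ℤ) c₂ z₂ := ⟨b₂, x₂, y₂, by rwa [Int.cast_zero]⟩
  exact stmt_9_general (by simp [ha₁, hc₂]) ⟨b₁, 0, 0, hg⟩ hh'
    (hΓ ▸ Subgroup.subset_closure (by simp))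
    (hΓ ▸ Subgroup.subset_closure (by simp))
end
end

section
/- Let a₁ be a nonzero integer, n a positive integer, y₁, z₁, y₂, z₂, x₃ ∈ ℝ with x₃ ≠ 0, and let Γ be the group of affine transformations of ℝ³ generated by g = ([[1,a₁,0],[0,1,0],[0,0,1]], (0,y₁,z₁)), h = ([[1,0,n·a₁],[0,1,0],[0,0,1]], (0,y₂,z₂)) and the pure translation t = (I, (x₃,0,0)). Assume that the translation subgroup of Γ has rank 1, i.e., the vector part of every pure translation belonging to Γ is a real multiple of (x₃,0,0). Then Γ acts freely and properly discontinuously on ℝ³ if and only if the vectors (0,y₁,z₁), (0,y₂,z₂), (x₃,0,0) are linearly independent and (a₁·y₂ − n·a₁·z₁)/x₃ ∈ ℚ; in that case the orbit space ℝ³/Γ is compact. -/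
open Matrix

noncomputable section

/-!
Write `κ = a₁ y₂ - n a₁ z₁` and `A = ℤ κ + ℤ x₃`. The commutator of `g` and `h` is the central
translation by `(κ, 0, 0)`, so every element of `Γ` is uniquely `g ^ p₀ * h ^ p₁` followed by the
translation by `(s, 0, 0)` with `s ∈ A`. It moves the last two coordinates by the lattice point
`p₀ (y₁, z₁) + p₁ (y₂, z₂)` and, for fixed `p`, the first one by `s` plus a quantity bounded on
compact sets. Hence `Γ` acts properly discontinuously if and only if every ball contains the
lattice points of only finitely many `p`, which means that `(y₁, z₁)` and `(y₂, z₂)` are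
independent, and `A` is discrete, which means that `κ / x₃` is rational. In this case an element
with a fixed point has `p = 0` and `s = 0`, and the lattice and the translation by `x₃` bring every
point into a fixed box.
-/

section Lattice

variable {ι E : Type*} [Fintype ι] [NormedAddCommGroup E] [NormedSpace ℝ E] {v : ι → E}

theorem infinite_norm_sum_zsmul_le_of_not_linearIndependent (hv : ¬LinearIndependent ℝ v) :
    {p : ι → ℤ | ‖∑ i, p i • v i‖ ≤ ∑ i, ‖v i‖}.Infinite := by
  obtain ⟨b, hb, i₀, hi₀⟩ := Fintype.not_linearIndependent_iff.1 hv
  -- Rounding the real multiples `m • d` of a relation leaves only bounded fractional parts.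
  set d : ι → ℝ := fun i ↦ b i / b i₀ with hd
  have hdv : ∑ i, d i • v i = 0 := by
    simp only [hd, div_eq_inv_mul, mul_smul, ← Finset.smul_sum, hb, smul_zero]
  let p : ℤ → ι → ℤ := fun m i ↦ ⌊m * d i⌋
  have p_injective : Function.Injective p := fun m m' h ↦ by
    simpa [p, hd, hi₀] using congrFun h i₀
  refine Set.infinite_of_injective_forall_mem p_injective fun m ↦ ?_
  have sum_floor_eq : ∑ i, p m i • v i = -∑ i, Int.fract (m * d i) • v i := by
    simp only [p, ← Int.self_sub_floor, sub_smul, mul_smul, Finset.sum_sub_distrib,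
      ← Finset.smul_sum, hdv, smul_zero, zero_sub, neg_neg, Int.cast_smul_eq_zsmul]
  rw [Set.mem_ofPred, sum_floor_eq, norm_neg]
  refine norm_sum_le_of_le _ fun i _ ↦ ?_
  rw [norm_smul, Real.norm_of_nonneg (Int.fract_nonneg _)]
  exact mul_le_of_le_one_left (norm_nonneg _) (Int.fract_lt_one _).le

theorem finite_norm_sum_zsmul_le_of_linearIndependent (hv : LinearIndependent ℝ v) (R : ℝ) :
    {p : ι → ℤ | ‖∑ i, p i • v i‖ ≤ R}.Finite := by
  obtain ⟨K, -, hK⟩ := (Fintype.linearCombination ℝ v).exists_antilipschitzWith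
    (LinearMap.ker_eq_bot.2 hv.fintypeLinearCombination_injective)
  refine ((isCompact_closedBall (0 : ι → ℤ) (K * R)).finite_of_discrete).subset fun p hp ↦ ?_
  have norm_cast_eq : ‖fun i ↦ (p i : ℝ)‖ = ‖p‖ := by
    simp only [Pi.norm_def, ← norm_toNNReal, Int.norm_cast_real]
  have bound := hK.le_mul_norm (map_zero _) fun i ↦ (p i : ℝ)
  simp only [norm_cast_eq, Fintype.linearCombination_apply, Int.cast_smul_eq_zsmul] at bound
  exact mem_closedBall_zero_iff.2 (bound.trans (mul_le_mul_of_nonneg_left hp K.2))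

theorem linearIndependent_iff_forall_finite_norm_sum_zsmul_le :
    LinearIndependent ℝ v ↔ ∀ R : ℝ, {p : ι → ℤ | ‖∑ i, p i • v i‖ ≤ R}.Finite :=
  ⟨finite_norm_sum_zsmul_le_of_linearIndependent, fun hfin ↦ not_not.1 fun hv ↦
    infinite_norm_sum_zsmul_le_of_not_linearIndependent hv (hfin _)⟩

theorem exists_norm_add_sum_zsmul_le (b : Module.Basis ι ℝ E) (x : E) :
    ∃ p : ι → ℤ, ‖x + ∑ i, p i • b i‖ ≤ ∑ i, ‖b i‖ := by
  refine ⟨fun i ↦ -⌊b.repr x i⌋, ?_⟩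
  have fract_eq : x + ∑ i, -⌊b.repr x i⌋ • b i = ZSpan.fract b x := by
    simp [ZSpan.fract_apply, ZSpan.floor, sub_eq_add_neg]
  exact fract_eq ▸ ZSpan.norm_fract_le b x

end Lattice

theorem not_dense_iff_forall_finite_abs_le (A : AddSubgroup ℝ) :
    ¬Dense (A : Set ℝ) ↔ ∀ R : ℝ, {s | s ∈ A ∧ |s| ≤ R}.Finite := by
  refine ⟨fun hA R ↦ ?_, fun hfin hA ↦ ?_⟩
  · obtain ⟨d, rfl⟩ := A.dense_or_cyclic.resolve_left hA
    rw [← AddSubgroup.zmultiples_eq_closure]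
    have discrete : DiscreteTopology (AddSubgroup.zmultiples d) := inferInstance
    refine (Metric.finite_isBounded_inter_isClosed ⟨discrete⟩ Metric.isBounded_closedBall
      AddSubgroup.isClosed_of_discrete).subset fun s hs ↦ ⟨mem_closedBall_zero_iff.2 hs.2, hs.1⟩
  · have ball_subset : Set.Ioo (-1 : ℝ) 1 ⊆ {s | s ∈ A ∧ |s| ≤ 1} :=
      (hA.open_subset_closure_inter isOpen_Ioo).trans
        (closure_minimal (fun s hs ↦ ⟨hs.2, abs_le.2 ⟨hs.1.1.le, hs.1.2.le⟩⟩) (hfin 1).isClosed)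
    exact Set.Ioo_infinite (by norm_num) ((hfin 1).subset ball_subset)

theorem exists_mem_abs_add_le {A : AddSubgroup ℝ} {r : ℝ} (hr : r ≠ 0) (hrA : r ∈ A) (x : ℝ) :
    ∃ s ∈ A, |x + s| ≤ |r| := by
  refine ⟨-⌊x / r⌋ • r, A.zsmul_mem hrA _, ?_⟩
  have fract_eq : x + -⌊x / r⌋ • r = Int.fract (x / r) * r := by
    simp only [← Int.self_sub_floor, zsmul_eq_mul, sub_mul, div_mul_cancel₀ x hr]
    push_cast
    ring
  rw [fract_eq, abs_mul, Int.abs_fract]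
  exact mul_le_of_le_one_left (abs_nonneg r) (Int.fract_lt_one _).le

theorem linearIndependent_vecCons_zero_iff {K : Type*} [Field K] {u v : Fin 2 → K} {r : K}
    (hr : r ≠ 0) :
    LinearIndependent K ![vecCons 0 u, vecCons 0 v, ![r, 0, 0]] ↔
      LinearIndependent K ![u, v] := by
  have h₃ := linearIndependent_rows_iff_isUnit (A := of ![vecCons 0 u, vecCons 0 v, ![r, 0, 0]])
  have h₂ := linearIndependent_rows_iff_isUnit (A := of ![u, v])
  rw [isUnit_iff_isUnit_det] at h₂ h₃
  refine h₃.trans (Iff.trans ?_ h₂.symm)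
  have det_eq : (of ![vecCons 0 u, vecCons 0 v, ![r, 0, 0]]).det = r * (of ![u, v]).det := by
    simp only [det_fin_three, det_fin_two, of_apply, cons_val', cons_val, cons_val_zero,
      cons_val_one, cons_val_fin_one]
    ring
  rw [det_eq, IsUnit.mul_iff, and_iff_right hr.isUnit]

theorem norm_vecCons {E : Type*} [SeminormedAddGroup E] {n : ℕ} (x : E) (w : Fin n → E) :
    ‖vecCons x w‖ = max ‖x‖ ‖w‖ := by
  simp [Pi.norm_def, Fin.univ_succ, Finset.sup_map, Function.comp_def]

theorem norm_vecTail_le {E : Type*} [SeminormedAddGroup E] {n : ℕ} (w : Fin (n + 1) → E) :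
    ‖vecTail w‖ ≤ ‖w‖ :=
  (pi_norm_le_iff_of_nonneg (norm_nonneg w)).2 fun i ↦ norm_le_pi_norm w i.succ

theorem HasForm.ext {γ δ : AffT} {A : Matrix (Fin 3) (Fin 3) ℝ} {v : E3} (hγ : HasForm γ A v)
    (hδ : HasForm δ A v) : γ = δ :=
  AffineEquiv.ext fun x ↦ (hγ x).trans (hδ x).symm

theorem IsTranslationBy.hasForm {γ : AffT} {v : E3} (hγ : IsTranslationBy γ v) : HasForm γ 1 v :=
  fun x ↦ by rw [hγ x, one_mulVec]

theorem hasCompactQuotient_of_forall_exists_mem {Γ : Subgroup AffT} {K : Set E3}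
    (hK : IsCompact K) (hΓ : ∀ x, ∃ γ ∈ Γ, γ x ∈ K) : HasCompactQuotient Γ := by
  have image_eq_univ : Quotient.mk (orbitSetoid Γ) '' K = Set.univ := by
    refine Set.eq_univ_of_forall (Quotient.ind fun x ↦ ?_)
    obtain ⟨γ, hγ, hx⟩ := hΓ x
    exact ⟨γ x, hx, Quotient.sound ((orbitSetoid Γ).symm ⟨γ, hγ, rfl⟩)⟩
  exact ⟨image_eq_univ ▸ hK.image continuous_quotient_mk'⟩

section NormalForm

open scoped commutatorElement

variable (a : Fin 2 → ℝ) (u : Fin 2 → Fin 2 → ℝ)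

/-- The unipotent linear map `x ↦ (x₀ + p₀ a₀ x₁ + p₁ a₁ x₂, x₁, x₂)`, the linear part of
`normalForm a u p s`. -/
def shear (p : Fin 2 → ℤ) : SpecialLinearGroup (Fin 3) ℝ :=
  ⟨!![1, p 0 * a 0, p 1 * a 1; 0, 1, 0; 0, 0, 1], by simp [det_fin_three]⟩

/-- The first coordinate of the vector part of `g ^ p 0 * h ^ p 1`, where `g` and `h` have linear
parts `shear a ![1, 0]` and `shear a ![0, 1]` and vector parts `(0, u 0)` and `(0, u 1)`. -/
def quadraticShift (p : Fin 2 → ℤ) : ℝ :=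
  a 0 * u 0 0 * (p 0 * (p 0 - 1) / 2) + a 1 * u 1 1 * (p 1 * (p 1 - 1) / 2) +
    p 0 * p 1 * a 0 * u 1 0

/-- The amount by which the commutator of `g` and `h` (as in `quadraticShift`) translates the first
coordinate. -/
def commutatorShift : ℝ := a 0 * u 1 0 - a 1 * u 0 1

/-- The element `g ^ p 0 * h ^ p 1` (with `g` and `h` as in `quadraticShift`), followed by the
translation by `s` in the first coordinate. -/
def normalForm (p : Fin 2 → ℤ) (s : ℝ) : AffT :=
  (SpecialLinearGroup.toLin' (shear a p)).toAffineEquiv.trans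
    (AffineEquiv.constVAdd ℝ E3 (vecCons (quadraticShift a u p + s) (∑ i, p i • u i)))

theorem normalForm_hasForm (p : Fin 2 → ℤ) (s : ℝ) :
    HasForm (normalForm a u p s) (shear a p)
      (vecCons (quadraticShift a u p + s) (∑ i, p i • u i)) := fun x ↦ by
  simp [normalForm, add_comm, SpecialLinearGroup.toLin'_apply]

theorem normalForm_apply (p : Fin 2 → ℤ) (s : ℝ) (x : E3) :
    normalForm a u p s x =
      vecCons (x 0 + p 0 * a 0 * x 1 + p 1 * a 1 * x 2 + quadraticShift a u p + s)
        (vecTail x + ∑ i, p i • u i) := by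
  rw [normalForm_hasForm a u p s x]
  ext i
  fin_cases i
  · simp only [shear, cons_mulVec, dotProduct, Fin.sum_univ_three, cons_val, cons_val_zero,
      cons_val_one, Fin.zero_eta, Pi.add_apply]
    ring
  all_goals simp [shear, dotProduct, Fin.sum_univ_three, vecTail]

theorem normalForm_zero : normalForm a u 0 0 = 1 := by
  ext x i
  fin_cases i <;> simp [normalForm_apply, quadraticShift, vecTail]

theorem normalForm_mul (p q : Fin 2 → ℤ) (s r : ℝ) :
    normalForm a u p s * normalForm a u q r =
      normalForm a u (p + q) (s + r - q 0 * p 1 * commutatorShift a u) := by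
  ext x i
  rw [AffineEquiv.coe_mul, Function.comp_apply]
  fin_cases i <;>
    simp only [normalForm_apply, quadraticShift, commutatorShift, vecTail, Fin.sum_univ_two,
      Fin.zero_eta, Fin.mk_one, Fin.reduceFinMk, Fin.succ_zero_eq_one, Fin.succ_one_eq_two,
      cons_val, cons_val_zero, cons_val_one, Function.comp_apply, zsmul_eq_mul, Pi.add_apply,
      Pi.mul_apply, Pi.intCast_apply, Int.cast_add] <;>
    ring

theorem normalForm_inv (p : Fin 2 → ℤ) (s : ℝ) :
    (normalForm a u p s)⁻¹ = normalForm a u (-p) (-s - p 0 * p 1 * commutatorShift a u) := by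
  refine inv_eq_of_mul_eq_one_right ?_
  rw [normalForm_mul, ← normalForm_zero a u, add_neg_cancel]
  congr 1
  push_cast [Pi.neg_apply]
  ring

theorem normalForm_zpow {p : Fin 2 → ℤ} (hp : p 0 * p 1 = 0) (s : ℝ) (m : ℤ) :
    normalForm a u p s ^ m = normalForm a u (m • p) (m * s) := by
  have hp' : (p 0 * p 1 : ℝ) = 0 := mod_cast hp
  have mul_self (m : ℤ) : normalForm a u (m • p) (m * s) * normalForm a u p s =
      normalForm a u ((m + 1) • p) ((m + 1 : ℤ) * s) := by
    rw [normalForm_mul, add_smul, one_smul]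
    congr 1
    push_cast [Pi.smul_apply, smul_eq_mul]
    linear_combination (-m * commutatorShift a u) * hp'
  induction m using Int.induction_on with
  | zero => simp [normalForm_zero]
  | succ m ih => rw [_root_.zpow_add_one, ih, mul_self]
  | pred m ih => rw [_root_.zpow_sub_one, ih, mul_inv_eq_iff_eq_mul, mul_self, sub_add_cancel]

theorem normalForm_commutator (s r : ℝ) :
    ⁅normalForm a u ![1, 0] s, normalForm a u ![0, 1] r⁆ =
      normalForm a u 0 (commutatorShift a u) := by
  simp only [commutatorElement_def, normalForm_mul, normalForm_inv]
  congr 1 <;> simp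

theorem normalForm_eq_word (p : Fin 2 → ℤ) (r : ℝ) (k l : ℤ) :
    normalForm a u p (k • r + l • commutatorShift a u) =
      normalForm a u ![1, 0] 0 ^ p 0 * normalForm a u ![0, 1] 0 ^ p 1 *
        normalForm a u 0 r ^ k * normalForm a u 0 (commutatorShift a u) ^ l := by
  simp only [normalForm_zpow a u (p := ![1, 0]) (by simp),
    normalForm_zpow a u (p := ![0, 1]) (by simp), normalForm_zpow a u (p := 0) (by simp),
    normalForm_mul]
  congr 1
  · ext i
    fin_cases i <;> simp
  · simp

variable {a} in
theorem normalForm_injective2 (ha : ∀ i, a i ≠ 0) : Function.Injective2 (normalForm a u) := by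
  intro p q s r h
  have apply_eq (x : E3) := congrFun (congrArg (fun γ : AffT ↦ γ x) h) 0
  simp only [normalForm_apply, cons_val_zero] at apply_eq
  have at_zero : quadraticShift a u p + s = quadraticShift a u q + r := by
    simpa using apply_eq 0
  have at_single_one : p 0 * a 0 + quadraticShift a u p + s =
      q 0 * a 0 + quadraticShift a u q + r := by
    simpa using apply_eq (Pi.single 1 1)
  have at_single_two : p 1 * a 1 + quadraticShift a u p + s =
      q 1 * a 1 + quadraticShift a u q + r := by
    simpa using apply_eq (Pi.single 2 1)
  have mul_eq₀ : (p 0 : ℝ) * a 0 = q 0 * a 0 := by linear_combination at_single_one - at_zero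
  have mul_eq₁ : (p 1 : ℝ) * a 1 = q 1 * a 1 := by linear_combination at_single_two - at_zero
  obtain rfl : p = q := funext <| Fin.forall_fin_two.2
    ⟨Int.cast_injective (mul_right_cancel₀ (ha 0) mul_eq₀),
      Int.cast_injective (mul_right_cancel₀ (ha 1) mul_eq₁)⟩
  exact ⟨rfl, add_left_cancel at_zero⟩

theorem norm_normalForm_apply_zero (p : Fin 2 → ℤ) (s : ℝ) :
    ‖normalForm a u p s 0‖ = max |quadraticShift a u p + s| ‖∑ i, p i • u i‖ := by
  have vecTail_zero : vecTail (0 : E3) = 0 := rfl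
  simp [normalForm_apply, norm_vecCons, vecTail_zero]

theorem norm_sum_zsmul_le_of_normalForm (p : Fin 2 → ℤ) (s : ℝ) (x : E3) :
    ‖∑ i, p i • u i‖ ≤ ‖normalForm a u p s x‖ + ‖x‖ := by
  have sum_eq : ∑ i, p i • u i = vecTail (normalForm a u p s x) - vecTail x := by
    rw [normalForm_apply, tail_cons, add_sub_cancel_left]
  rw [sum_eq]
  exact (norm_sub_le _ _).trans (add_le_add (norm_vecTail_le _) (norm_vecTail_le _))

theorem abs_le_of_normalForm (p : Fin 2 → ℤ) (s : ℝ) (x : E3) :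
    |s| ≤ ‖normalForm a u p s x‖ + (1 + |p 0 * a 0| + |p 1 * a 1|) * ‖x‖ +
      |quadraticShift a u p| := by
  have hx (i) : ‖x i‖ ≤ ‖x‖ := norm_le_pi_norm x i
  calc |s| = |normalForm a u p s x 0 - (x 0 + p 0 * a 0 * x 1 + p 1 * a 1 * x 2) -
        quadraticShift a u p| := by
        rw [normalForm_apply, cons_val_zero]
        ring_nf
    _ ≤ |normalForm a u p s x 0| + (|x 0| + |p 0 * a 0 * x 1| + |p 1 * a 1 * x 2|) +
        |quadraticShift a u p| := by
        grw [abs_sub, abs_sub, abs_add_three]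
    _ ≤ ‖normalForm a u p s x‖ + (‖x‖ + |p 0 * a 0| * ‖x‖ + |p 1 * a 1| * ‖x‖) +
        |quadraticShift a u p| := by
        rw [abs_mul _ (x 1), abs_mul _ (x 2)]
        gcongr
        exacts [norm_le_pi_norm (normalForm a u p s x) 0, hx 0, hx 1, hx 2]
    _ = _ := by ring

end NormalForm

section Heisenberg

variable {a : Fin 2 → ℝ} {u : Fin 2 → Fin 2 → ℝ} {A : AddSubgroup ℝ}
  (hA : commutatorShift a u ∈ A)

/-- The group of all `normalForm a u p s` with `s ∈ A`: a Heisenberg type extension of `ℤ²` by the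
group `A` of translations in the first coordinate. -/
def heisenberg : Subgroup AffT where
  carrier := {γ | ∃ p, ∃ s ∈ A, normalForm a u p s = γ}
  one_mem' := ⟨0, 0, A.zero_mem, normalForm_zero a u⟩
  mul_mem' := by
    rintro _ _ ⟨p, s, hs, rfl⟩ ⟨q, r, hr, rfl⟩
    refine ⟨_, _, A.sub_mem (A.add_mem hs hr) ?_, (normalForm_mul a u p q s r).symm⟩
    exact_mod_cast zsmul_eq_mul (commutatorShift a u) (q 0 * p 1) ▸ A.zsmul_mem hA _
  inv_mem' := by
    rintro _ ⟨p, s, hs, rfl⟩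
    refine ⟨_, _, A.sub_mem (A.neg_mem hs) ?_, (normalForm_inv a u p s).symm⟩
    exact_mod_cast zsmul_eq_mul (commutatorShift a u) (p 0 * p 1) ▸ A.zsmul_mem hA _

theorem normalForm_mem_heisenberg (p : Fin 2 → ℤ) {s : ℝ} (hs : s ∈ A) :
    normalForm a u p s ∈ heisenberg hA :=
  ⟨p, s, hs, rfl⟩

theorem normalForm_mem_of_mem_closure {Γ : Subgroup AffT} {r s : ℝ}
    (hg : normalForm a u ![1, 0] 0 ∈ Γ) (hh : normalForm a u ![0, 1] 0 ∈ Γ)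
    (ht : normalForm a u 0 r ∈ Γ) (p : Fin 2 → ℤ)
    (hs : s ∈ AddSubgroup.closure {commutatorShift a u, r}) : normalForm a u p s ∈ Γ := by
  obtain ⟨l, k, rfl⟩ := AddSubgroup.mem_closure_pair.1 hs
  rw [add_comm, normalForm_eq_word, ← normalForm_commutator a u 0 0, commutatorElement_def]
  apply_rules [mul_mem, zpow_mem, inv_mem]

theorem closure_eq_heisenberg (a : Fin 2 → ℝ) (u : Fin 2 → Fin 2 → ℝ) (r : ℝ) :
    Subgroup.closure {normalForm a u ![1, 0] 0, normalForm a u ![0, 1] 0, normalForm a u 0 r} =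
      heisenberg (A := .closure {commutatorShift a u, r})
        (AddSubgroup.subset_closure (Set.mem_insert _ _)) := by
  refine le_antisymm ((Subgroup.closure_le _).2 ?_) ?_
  · rintro _ (rfl | rfl | rfl)
    · exact normalForm_mem_heisenberg _ _ (zero_mem _)
    · exact normalForm_mem_heisenberg _ _ (zero_mem _)
    · exact normalForm_mem_heisenberg _ _ (AddSubgroup.subset_closure (by simp))
  · rintro _ ⟨p, s, hs, rfl⟩
    apply normalForm_mem_of_mem_closure _ _ _ p hs <;> exact Subgroup.subset_closure (by simp)

theorem isFreeAction_heisenberg (hu : LinearIndependent ℝ u) : IsFreeAction (heisenberg hA) := by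
  rintro _ ⟨p, s, -, rfl⟩ ⟨x, hx⟩
  rw [normalForm_apply] at hx
  have sum_eq_zero : ∑ i, (p i : ℝ) • u i = 0 := by
    simpa [Int.cast_smul_eq_zsmul] using congrArg vecTail hx
  obtain rfl : p = 0 :=
    funext fun i ↦ mod_cast Fintype.linearIndependent_iff.1 hu _ sum_eq_zero i
  obtain rfl : s = 0 := by simpa [quadraticShift] using congrFun hx 0
  exact normalForm_zero a u

theorem finite_norm_normalForm_apply_zero_le (ha : ∀ i, a i ≠ 0)
    (hpd : IsProperlyDiscontinuous (heisenberg hA)) (R : ℝ) :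
    {x : (Fin 2 → ℤ) × ℝ | x.2 ∈ A ∧ ‖normalForm a u x.1 x.2 0‖ ≤ R}.Finite := by
  refine Set.Finite.of_injOn (f := Function.uncurry (normalForm a u)) ?_
    (normalForm_injective2 u ha).uncurry.injOn
    (hpd {0} (Metric.closedBall 0 R) isCompact_singleton (isCompact_closedBall 0 R))
  rintro ⟨p, s⟩ ⟨hs, hR⟩
  exact ⟨normalForm_mem_heisenberg hA p hs, _, ⟨0, rfl, rfl⟩, mem_closedBall_zero_iff.2 hR⟩

theorem isProperlyDiscontinuous_heisenberg (hu : LinearIndependent ℝ u)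
    (hAd : ¬Dense (A : Set ℝ)) : IsProperlyDiscontinuous (heisenberg hA) := by
  intro K L hK hL
  obtain ⟨R, hR⟩ := (hK.union hL).isBounded.exists_norm_le
  let B (p : Fin 2 → ℤ) : ℝ := R + (1 + |p 0 * a 0| + |p 1 * a 1|) * R + |quadraticShift a u p|
  have finite_params := (finite_norm_sum_zsmul_le_of_linearIndependent hu (R + R)).biUnion fun p _ ↦
    ((not_dense_iff_forall_finite_abs_le A).1 hAd (B p)).image (normalForm a u p)
  refine finite_params.subset ?_
  rintro _ ⟨⟨p, s, hs, rfl⟩, _, ⟨x, hx, rfl⟩, hγx⟩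
  have hxR := hR x (.inl hx)
  have hγxR := hR _ (.inr hγx)
  have sum_le : ‖∑ i, p i • u i‖ ≤ R + R := by
    grw [norm_sum_zsmul_le_of_normalForm a u p s x, hγxR, hxR]
  have abs_le : |s| ≤ B p := by
    grw [abs_le_of_normalForm a u p s x, hγxR, hxR]
  exact Set.mem_biUnion sum_le ⟨s, ⟨hs, abs_le⟩, rfl⟩

theorem linearIndependent_of_isProperlyDiscontinuous (ha : ∀ i, a i ≠ 0) {r : ℝ} (hr : r ≠ 0)
    (hrA : r ∈ A) (hpd : IsProperlyDiscontinuous (heisenberg hA)) : LinearIndependent ℝ u := by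
  refine linearIndependent_iff_forall_finite_norm_sum_zsmul_le.2 fun R ↦ ?_
  refine ((finite_norm_normalForm_apply_zero_le hA ha hpd (max |r| R)).image Prod.fst).subset ?_
  intro p hp
  obtain ⟨s, hs, hsr⟩ := exists_mem_abs_add_le hr hrA (quadraticShift a u p)
  exact ⟨(p, s), ⟨hs, (norm_normalForm_apply_zero a u p s).trans_le (max_le_max hsr hp)⟩, rfl⟩

theorem not_dense_of_isProperlyDiscontinuous (ha : ∀ i, a i ≠ 0)
    (hpd : IsProperlyDiscontinuous (heisenberg hA)) : ¬Dense (A : Set ℝ) := by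
  refine (not_dense_iff_forall_finite_abs_le A).2 fun R ↦ ?_
  refine ((finite_norm_normalForm_apply_zero_le hA ha hpd R).image Prod.snd).subset ?_
  rintro s ⟨hs, hsR⟩
  refine ⟨(0, s), ⟨hs, ?_⟩, rfl⟩
  simpa [norm_normalForm_apply_zero, quadraticShift, (abs_nonneg s).trans hsR] using hsR

theorem isProperlyDiscontinuous_heisenberg_iff (ha : ∀ i, a i ≠ 0) {r : ℝ} (hr : r ≠ 0)
    (hrA : r ∈ A) :
    IsProperlyDiscontinuous (heisenberg hA) ↔ LinearIndependent ℝ u ∧ ¬Dense (A : Set ℝ) :=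
  ⟨fun hpd ↦ ⟨linearIndependent_of_isProperlyDiscontinuous hA ha hr hrA hpd,
    not_dense_of_isProperlyDiscontinuous hA ha hpd⟩,
    fun h ↦ isProperlyDiscontinuous_heisenberg hA h.1 h.2⟩

theorem hasCompactQuotient_heisenberg (hu : LinearIndependent ℝ u) {r : ℝ} (hr : r ≠ 0)
    (hrA : r ∈ A) : HasCompactQuotient (heisenberg hA) := by
  let b := basisOfLinearIndependentOfCardEqFinrank hu (by simp)
  refine hasCompactQuotient_of_forall_exists_mem
    (isCompact_closedBall 0 (max |r| (∑ i, ‖u i‖))) fun x ↦ ?_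
  obtain ⟨p, hp⟩ := exists_norm_add_sum_zsmul_le b (vecTail x)
  obtain ⟨s, hs, hsr⟩ := exists_mem_abs_add_le hr hrA
    (x 0 + p 0 * a 0 * x 1 + p 1 * a 1 * x 2 + quadraticShift a u p)
  refine ⟨_, normalForm_mem_heisenberg hA p hs, mem_closedBall_zero_iff.2 ?_⟩
  rw [coe_basisOfLinearIndependentOfCardEqFinrank] at hp
  rw [normalForm_apply, norm_vecCons]
  exact max_le_max hsr hp

end Heisenberg

theorem stmt_10_general {a b y₁ z₁ y₂ z₂ x₃ : ℝ} (ha : a ≠ 0) (hb : b ≠ 0) (hx₃ : x₃ ≠ 0)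
    {g h t : AffT} (hg : HasForm g !![1, a, 0; 0, 1, 0; 0, 0, 1] ![0, y₁, z₁])
    (hh : HasForm h !![1, 0, b; 0, 1, 0; 0, 0, 1] ![0, y₂, z₂])
    (ht : IsTranslationBy t ![x₃, 0, 0]) {Γ : Subgroup AffT}
    (hΓ : Γ = Subgroup.closure {g, h, t}) :
    (IsProperlyDiscontinuous Γ ↔
      LinearIndependent ℝ ![![0, y₁, z₁], ![0, y₂, z₂], ![x₃, 0, 0]] ∧
        ∃ q : ℚ, (a * y₂ - b * z₁) / x₃ = q) ∧
    (IsProperlyDiscontinuous Γ → IsFreeAction Γ ∧ HasCompactQuotient Γ) := by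
  let c : Fin 2 → ℝ := ![a, b]
  let u : Fin 2 → Fin 2 → ℝ := ![![y₁, z₁], ![y₂, z₂]]
  obtain rfl : g = normalForm c u ![1, 0] 0 := hg.ext <| by
    simpa [shear, quadraticShift, c, u] using normalForm_hasForm c u ![1, 0] 0
  obtain rfl : h = normalForm c u ![0, 1] 0 := hh.ext <| by
    simpa [shear, quadraticShift, c, u] using normalForm_hasForm c u ![0, 1] 0
  obtain rfl : t = normalForm c u 0 x₃ := ht.hasForm.ext <| by
    convert normalForm_hasForm c u 0 x₃ using 1
    · simp [shear, one_fin_three]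
    · simp [quadraticShift, ← List.ofFn_inj]
  have hc : ∀ i, c i ≠ 0 := Fin.forall_fin_two.2 ⟨ha, hb⟩
  have hx₃_mem : x₃ ∈ AddSubgroup.closure {commutatorShift c u, x₃} :=
    AddSubgroup.subset_closure (by simp)
  have hli := linearIndependent_vecCons_zero_iff (u := u 0) (v := u 1) hx₃
  have hrat : (∃ q : ℚ, (a * y₂ - b * z₁) / x₃ = q) ↔ ¬Irrational (commutatorShift c u / x₃) := by
    simp [Irrational, commutatorShift, c, u, eq_comm]
  rw [hΓ, closure_eq_heisenberg, hrat, ← dense_addSubgroupClosure_pair_iff]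
  have hpd := isProperlyDiscontinuous_heisenberg_iff
    (AddSubgroup.subset_closure (Set.mem_insert _ _)) hc hx₃ hx₃_mem
  refine ⟨?_, fun h ↦ ?_⟩
  · exact hpd.trans (and_congr_left' hli.symm)
  · have hu := (hpd.1 h).1
    exact ⟨isFreeAction_heisenberg _ hu, hasCompactQuotient_heisenberg _ hu hx₃ hx₃_mem⟩

/-- rank-one translation subgroup, `c = 0` case. -/
theorem stmt_10 (a₁ : ℤ) (ha₁ : a₁ ≠ 0) (n : ℕ) (hn : 0 < n)
    (y₁ z₁ y₂ z₂ x₃ : ℝ) (hx₃ : x₃ ≠ 0)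
    (g h t : AffT)
    (hg : HasForm g !![1, (a₁ : ℝ), 0; 0, 1, 0; 0, 0, 1] ![0, y₁, z₁])
    (hh : HasForm h !![1, 0, (n : ℝ) * (a₁ : ℝ); 0, 1, 0; 0, 0, 1] ![0, y₂, z₂])
    (ht : IsTranslationBy t ![x₃, 0, 0])
    (Γ : Subgroup AffT) (hΓ : Γ = Subgroup.closure {g, h, t})
    (hrk : ∀ γ ∈ Γ, ∀ w : E3, IsTranslationBy γ w → ∃ r : ℝ, w = r • ![x₃, 0, 0]) :
    ((IsFreeAction Γ ∧ IsProperlyDiscontinuous Γ) ↔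
      (LinearIndependent ℝ ![![0, y₁, z₁], ![0, y₂, z₂], ![x₃, 0, 0]] ∧
        ∃ q : ℚ, ((a₁ : ℝ) * y₂ - (n : ℝ) * (a₁ : ℝ) * z₁) / x₃ = (q : ℝ))) ∧
    (IsFreeAction Γ ∧ IsProperlyDiscontinuous Γ → HasCompactQuotient Γ) := by
  have ha : (a₁ : ℝ) ≠ 0 := Int.cast_ne_zero.2 ha₁
  have hb : (n : ℝ) * a₁ ≠ 0 := mul_ne_zero (Nat.cast_ne_zero.2 hn.ne') ha
  obtain ⟨hpd, hcons⟩ := stmt_10_general ha hb hx₃ hg hh ht hΓ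
  exact ⟨(and_iff_right_of_imp fun h ↦ (hcons h).1).trans hpd, fun h ↦ (hcons h.2).2⟩
end
end

section
/- Let Γ be a group of affine transformations of ℝ³ such that the linear part of every element of Γ is an integer upper unitriangular matrix (an upper triangular integer matrix with all diagonal entries equal to 1). If Γ acts freely and properly discontinuously on ℝ³ and the orbit space ℝ³/Γ is compact, then Γ contains a pure translation different from the identity. -/
open Matrix

noncomputable section

/-! Suppose that `Γ` contains no nontrivial translation, so that its elements are determined by
their linear parts, and write `(a, b, c)` for the entries `(0, 1)`, `(0, 2)`, `(1, 2)` of a linear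
part and `(u, v, w)` for the vector part. Elements with commuting linear parts commute, which is a
bilinear relation between linear and vector parts. If two linear parts did not commute, applying
this relation to the commutator of the two elements would give `w = 0` on all of `Γ`, making the
third coordinate an invariant function, which compactness of the quotient forbids. Hence `Γ` is
commutative. In that case `c` is a multiple of `w`, and `(a, b)` is a linear function of `(v, w)`
because the pairs `(v, w)` span the plane, again for lack of invariant functions. So the linear part
of an element is determined continuously by any point `k` that the element moves to the first
coordinate axis. As `k` ranges over a compact set meeting every orbit, only finitely many integer
matrices occur, and finitely many images of a compact set would cover the axis. -/

open Topology

section AffineGroup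

variable {n R : Type*} [Fintype n] [DecidableEq n] [CommRing R]

/-- The matrix of the linear part of an affine automorphism of `n → R`, as a homomorphism. The
vector part of `γ` needs no name of its own, since it is `γ 0`. -/
def linearMatrix : ((n → R) ≃ᵃ[R] (n → R)) →* Matrix n n R where
  toFun γ := LinearMap.toMatrix' γ.linear
  map_one' := LinearMap.toMatrix'_one
  map_mul' γ δ := LinearMap.toMatrix'_mul (γ.linear : (n → R) →ₗ[R] n → R) δ.linear

lemma apply_eq_linearMatrix_mulVec_add (γ : (n → R) ≃ᵃ[R] (n → R)) (x : n → R) :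
    γ x = linearMatrix γ *ᵥ x + γ 0 := by
  have hlinear : linearMatrix γ *ᵥ x = γ.linear x := LinearMap.toMatrix'_mulVec _ x
  simpa [hlinear] using γ.map_vadd 0 x

lemma linearMatrix_eq_of_forall_apply {γ : (n → R) ≃ᵃ[R] (n → R)} {A : Matrix n n R} {v : n → R}
    (h : ∀ x, γ x = A *ᵥ x + v) : linearMatrix γ = A := by
  have hzero : γ 0 = v := by simpa using h 0
  refine Matrix.mulVec_injective (funext fun x ↦ add_right_cancel (b := v) ?_)
  rw [← h x, apply_eq_linearMatrix_mulVec_add γ x, hzero]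

lemma mul_inv_apply_of_linearMatrix_eq {g h : (n → R) ≃ᵃ[R] (n → R)}
    (hgh : linearMatrix g = linearMatrix h) (x : n → R) : (g * h⁻¹) x = x + (g 0 - h 0) := by
  have hx : h (h⁻¹ x) = x := h.apply_symm_apply x
  calc (g * h⁻¹) x = g (h⁻¹ x) := rfl
    _ = h (h⁻¹ x) + (g 0 - h 0) := by
      rw [apply_eq_linearMatrix_mulVec_add g, apply_eq_linearMatrix_mulVec_add h (h⁻¹ x), hgh]
      abel
    _ = x + (g 0 - h 0) := by rw [hx]

lemma linearMatrix_mulVec_add_comm_of_commute {g h : (n → R) ≃ᵃ[R] (n → R)} (hgh : Commute g h) :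
    linearMatrix g *ᵥ h 0 + g 0 = linearMatrix h *ᵥ g 0 + h 0 := by
  rw [← apply_eq_linearMatrix_mulVec_add, ← apply_eq_linearMatrix_mulVec_add]
  exact DFunLike.congr_fun hgh.eq 0

lemma commute_of_injOn_of_commute_linearMatrix {Γ : Subgroup ((n → R) ≃ᵃ[R] (n → R))}
    (hinj : Set.InjOn linearMatrix (Γ : Set ((n → R) ≃ᵃ[R] (n → R))))
    {g h : (n → R) ≃ᵃ[R] (n → R)} (hg : g ∈ Γ) (hh : h ∈ Γ)
    (hgh : Commute (linearMatrix g) (linearMatrix h)) : Commute g h :=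
  hinj (Γ.mul_mem hg hh) (Γ.mul_mem hh hg) (by simpa only [map_mul] using hgh.eq)

end AffineGroup

section Compactness

lemma finite_inter_range_map_intCast {m n : Type*} {S : Set (Matrix m n ℝ)} [Finite m] [Finite n]
    (hS : IsCompact S) :
    (S ∩ Set.range fun B : Matrix m n ℤ ↦ B.map ((↑) : ℤ → ℝ)).Finite := by
  have : DiscreteTopology (Matrix m n ℤ) := inferInstanceAs (DiscreteTopology (m → n → ℤ))
  rw [← Set.image_preimage_eq_inter_range]
  exact (Int.isClosedEmbedding_coe_real.matrix_map.isCompact_preimage hS).finite_of_discrete.image _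

lemma exists_isCompact_image_eq_univ {X Y : Type*} [TopologicalSpace X] [TopologicalSpace Y]
    [WeaklyLocallyCompactSpace X] [CompactSpace Y] {f : X → Y} (hopen : IsOpenMap f)
    (hsurj : f.Surjective) : ∃ K, IsCompact K ∧ f '' K = Set.univ := by
  choose s hs using hsurj
  choose N hNcompact hNnhds using fun y ↦ exists_compact_mem_nhds (s y)
  have himage (y : Y) : f '' N y ∈ 𝓝 y := by
    simpa only [hs] using hopen.image_mem_nhds (hNnhds y)
  obtain ⟨t, ht⟩ := CompactSpace.elim_nhds_subcover _ himage
  refine ⟨⋃ y ∈ t, N y, t.isCompact_biUnion fun y _ ↦ hNcompact y, ?_⟩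
  rw [Set.image_iUnion₂, ht, Set.top_eq_univ]

end Compactness

section CompactQuotient

variable {Γ : Subgroup AffT}

lemma isOpenMap_mk_orbitSetoid (Γ : Subgroup AffT) : IsOpenMap (Quotient.mk (orbitSetoid Γ)) := by
  intro U hU
  have hpreimage : Quotient.mk (orbitSetoid Γ) ⁻¹' (Quotient.mk (orbitSetoid Γ) '' U) =
      ⋃ γ ∈ Γ, (γ : E3 → E3) ⁻¹' U := by
    ext x
    simp only [Set.mem_preimage, Set.mem_image, Set.mem_iUnion, exists_prop]
    constructor
    · rintro ⟨y, hy, hyx⟩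
      obtain ⟨γ, hγ, rfl⟩ := Quotient.exact hyx.symm
      exact ⟨γ, hγ, hy⟩
    · rintro ⟨γ, hγ, hx⟩
      exact ⟨γ x, hx, Quotient.sound ((orbitSetoid Γ).symm ⟨γ, hγ, rfl⟩)⟩
  have hopen : IsOpen (Quotient.mk (orbitSetoid Γ) ⁻¹' (Quotient.mk (orbitSetoid Γ) '' U)) := by
    rw [hpreimage]
    exact isOpen_biUnion fun γ _ ↦
      hU.preimage (AffineMap.continuous_of_finiteDimensional (γ : E3 →ᵃ[ℝ] E3))
  exact isQuotientMap_quotient_mk'.isOpen_preimage.1 hopen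

lemma exists_isCompact_forall_exists_apply_eq (hcomp : HasCompactQuotient Γ) :
    ∃ K : Set E3, IsCompact K ∧ ∀ x, ∃ γ ∈ Γ, ∃ k ∈ K, γ k = x := by
  have : CompactSpace (Quotient (orbitSetoid Γ)) := hcomp
  obtain ⟨K, hK, himage⟩ :=
    exists_isCompact_image_eq_univ (isOpenMap_mk_orbitSetoid Γ) Quotient.mk_surjective
  refine ⟨K, hK, fun x ↦ ?_⟩
  obtain ⟨k, hk, hkx⟩ := himage.ge (Set.mem_univ (Quotient.mk (orbitSetoid Γ) x))
  obtain ⟨γ, hγ, hγk⟩ := Quotient.exact hkx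
  exact ⟨γ, hγ, k, hk, hγk⟩

lemma isCompact_range_of_invariant (hcomp : HasCompactQuotient Γ) {Y : Type*} [TopologicalSpace Y]
    {f : E3 → Y} (hf : Continuous f) (hinv : ∀ γ ∈ Γ, ∀ x, f (γ x) = f x) :
    IsCompact (Set.range f) := by
  have : CompactSpace (Quotient (orbitSetoid Γ)) := hcomp
  have hlift : ∀ x y, orbitSetoid Γ x y → f x = f y := by
    rintro x _ ⟨γ, hγ, rfl⟩
    exact (hinv γ hγ x).symm
  have hrange : Set.range (Quotient.lift f hlift) = Set.range f := Set.range_quot_lift hlift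
  exact hrange ▸ isCompact_range (hf.quotient_lift hlift)

lemma eq_zero_of_linearMap_invariant (hcomp : HasCompactQuotient Γ) {f : E3 →ₗ[ℝ] ℝ}
    (hinv : ∀ γ ∈ Γ, ∀ x, f (γ x) = f x) : f = 0 := by
  by_contra hf
  have hrange := isCompact_range_of_invariant hcomp f.continuous_of_finiteDimensional hinv
  rw [(LinearMap.surjective_of_ne_zero hf).range_eq] at hrange
  exact noncompact_univ ℝ hrange

end CompactQuotient

/-- Upper unitriangular matrices: upper triangular with ones on the diagonal. They are the possible
linear parts of the groups considered here. -/
structure IsUnitriangular {n R : Type*} [LT n] [Zero R] [One R] (A : Matrix n n R) : Prop where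
  isUpperTriangular : A.IsUpperTriangular
  diag_eq_one : ∀ i, A i i = 1

namespace IsUnitriangular

section Matrix

variable {R : Type*} [CommRing R] {A B C : Matrix (Fin 3) (Fin 3) R}

lemma of_entries (a b c : R) : IsUnitriangular !![1, a, b; 0, 1, c; 0, 0, 1] where
  isUpperTriangular i j hij := by fin_cases i <;> fin_cases j <;> first | rfl | simp at hij
  diag_eq_one i := by fin_cases i <;> rfl

lemma eq_entries (hA : IsUnitriangular A) : A = !![1, A 0 1, A 0 2; 0, 1, A 1 2; 0, 0, 1] := by
  ext i j
  fin_cases i <;> fin_cases j <;>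
    first
    | rfl
    | exact hA.diag_eq_one _
    | exact hA.isUpperTriangular (by decide)

lemma mul_eq_entries (hA : IsUnitriangular A) (hB : IsUnitriangular B) :
    A * B = !![1, A 0 1 + B 0 1, A 0 2 + B 0 2 + A 0 1 * B 1 2; 0, 1, A 1 2 + B 1 2; 0, 0, 1] := by
  rw [hA.eq_entries, hB.eq_entries]
  ext i j
  fin_cases i <;> fin_cases j <;> simp [Matrix.mul_apply, Fin.sum_univ_three] <;> ring

lemma mulVec_eq (hA : IsUnitriangular A) (x : Fin 3 → R) :
    A *ᵥ x = ![x 0 + A 0 1 * x 1 + A 0 2 * x 2, x 1 + A 1 2 * x 2, x 2] := by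
  conv_lhs => rw [hA.eq_entries]
  ext i
  fin_cases i <;> simp [Matrix.mulVec, dotProduct, Fin.sum_univ_three]

lemma commute_of_mul_eq_mul (hA : IsUnitriangular A) (hB : IsUnitriangular B)
    (h : A 0 1 * B 1 2 = B 0 1 * A 1 2) : Commute A B := by
  rw [Commute, SemiconjBy, hA.mul_eq_entries hB, hB.mul_eq_entries hA, h, add_comm (A 0 1),
    add_comm (A 0 2), add_comm (A 1 2)]

lemma eq_entries_of_mul_mul_eq_mul (hA : IsUnitriangular A) (hB : IsUnitriangular B)
    (hC : IsUnitriangular C) (h : C * (B * A) = A * B) :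
    C = !![1, 0, A 0 1 * B 1 2 - B 0 1 * A 1 2; 0, 1, 0; 0, 0, 1] := by
  have hBA : IsUnitriangular (B * A) := by
    rw [hB.mul_eq_entries hA]
    exact of_entries ..
  rw [hC.mul_eq_entries hBA, hB.mul_eq_entries hA, hA.mul_eq_entries hB] at h
  have h01 : C 0 1 = 0 := by
    have h01 : C 0 1 + (B 0 1 + A 0 1) = A 0 1 + B 0 1 := congr_fun₂ h 0 1
    linear_combination h01
  have h12 : C 1 2 = 0 := by
    have h12 : C 1 2 + (B 1 2 + A 1 2) = A 1 2 + B 1 2 := congr_fun₂ h 1 2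
    linear_combination h12
  have h02 : C 0 2 = A 0 1 * B 1 2 - B 0 1 * A 1 2 := by
    have h02 : C 0 2 + (B 0 2 + A 0 2 + B 0 1 * A 1 2) + C 0 1 * (B 1 2 + A 1 2) =
        A 0 2 + B 0 2 + A 0 1 * B 1 2 := congr_fun₂ h 0 2
    linear_combination h02 - (B 1 2 + A 1 2) * h01
  rw [hC.eq_entries, h01, h02, h12]

end Matrix

section Affine

variable {R : Type*} [CommRing R] {g h t : (Fin 3 → R) ≃ᵃ[R] (Fin 3 → R)}

lemma apply_coord_one (hg : IsUnitriangular (linearMatrix g)) (x : Fin 3 → R) :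
    g x 1 = x 1 + linearMatrix g 1 2 * x 2 + g 0 1 := by
  rw [apply_eq_linearMatrix_mulVec_add, hg.mulVec_eq]
  rfl

lemma apply_coord_two (hg : IsUnitriangular (linearMatrix g)) (x : Fin 3 → R) :
    g x 2 = x 2 + g 0 2 := by
  rw [apply_eq_linearMatrix_mulVec_add, hg.mulVec_eq]
  rfl

lemma bilinear_coord_zero_of_commute (hg : IsUnitriangular (linearMatrix g))
    (hh : IsUnitriangular (linearMatrix h)) (hgh : Commute g h) :
    linearMatrix g 0 1 * h 0 1 + linearMatrix g 0 2 * h 0 2 =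
      linearMatrix h 0 1 * g 0 1 + linearMatrix h 0 2 * g 0 2 := by
  have hvec := linearMatrix_mulVec_add_comm_of_commute hgh
  rw [hg.mulVec_eq, hh.mulVec_eq] at hvec
  have hzero : h 0 0 + linearMatrix g 0 1 * h 0 1 + linearMatrix g 0 2 * h 0 2 + g 0 0 =
      g 0 0 + linearMatrix h 0 1 * g 0 1 + linearMatrix h 0 2 * g 0 2 + h 0 0 := congr_fun hvec 0
  linear_combination hzero

lemma bilinear_coord_one_of_commute (hg : IsUnitriangular (linearMatrix g))
    (hh : IsUnitriangular (linearMatrix h)) (hgh : Commute g h) :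
    linearMatrix g 1 2 * h 0 2 = linearMatrix h 1 2 * g 0 2 := by
  have hvec := linearMatrix_mulVec_add_comm_of_commute hgh
  rw [hg.mulVec_eq, hh.mulVec_eq] at hvec
  have hone : h 0 1 + linearMatrix g 1 2 * h 0 2 + g 0 1 =
      g 0 1 + linearMatrix h 1 2 * g 0 2 + h 0 1 := congr_fun hvec 1
  linear_combination hone

lemma vectorPart_of_mul_mul_eq_mul (hg : IsUnitriangular (linearMatrix g))
    (hh : IsUnitriangular (linearMatrix h)) (ht : IsUnitriangular (linearMatrix t))
    (hmul : t * (h * g) = g * h) :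
    t 0 1 = linearMatrix g 1 2 * h 0 2 - linearMatrix h 1 2 * g 0 2 ∧ t 0 2 = 0 := by
  have hzero : t (h (g 0)) = g (h 0) := DFunLike.congr_fun hmul 0
  have htmat := hg.eq_entries_of_mul_mul_eq_mul hh ht (by simp only [← map_mul, hmul])
  have htc : linearMatrix t 1 2 = 0 := congr_fun₂ htmat 1 2
  have hone := congr_fun hzero 1
  have htwo := congr_fun hzero 2
  rw [ht.apply_coord_one, hh.apply_coord_one (g 0), hg.apply_coord_one (h 0), htc] at hone
  rw [ht.apply_coord_two, hh.apply_coord_two (g 0), hg.apply_coord_two (h 0)] at htwo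
  exact ⟨by linear_combination hone, by linear_combination htwo⟩

end Affine

end IsUnitriangular

section UnitriangularGroup

variable {Γ : Subgroup AffT}

lemma exists_apply_zero_two_ne_zero (hΓ : ∀ γ ∈ Γ, IsUnitriangular (linearMatrix γ))
    (hcomp : HasCompactQuotient Γ) : ∃ γ ∈ Γ, γ 0 2 ≠ 0 := by
  by_contra! hzero
  have hproj : LinearMap.proj (R := ℝ) (φ := fun _ : Fin 3 ↦ ℝ) 2 = 0 :=
    eq_zero_of_linearMap_invariant hcomp fun γ hγ x ↦ by
      simp [(hΓ γ hγ).apply_coord_two x, hzero γ hγ]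
  simpa using LinearMap.congr_fun hproj (Pi.single 2 1)

lemma commute_of_injOn_of_hasCompactQuotient (hΓ : ∀ γ ∈ Γ, IsUnitriangular (linearMatrix γ))
    (hcomp : HasCompactQuotient Γ) (hinj : Set.InjOn linearMatrix (Γ : Set AffT))
    {g h : AffT} (hg : g ∈ Γ) (hh : h ∈ Γ) : Commute g h := by
  refine commute_of_injOn_of_commute_linearMatrix hinj hg hh
    ((hΓ g hg).commute_of_mul_eq_mul (hΓ h hh) ?_)
  by_contra hne
  obtain ⟨t, ht, htmul⟩ : ∃ t ∈ Γ, t * (h * g) = g * h :=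
    ⟨g * h * (h * g)⁻¹, Γ.mul_mem (Γ.mul_mem hg hh) (Γ.inv_mem (Γ.mul_mem hh hg)),
      inv_mul_cancel_right _ _⟩
  have htmat := (hΓ g hg).eq_entries_of_mul_mul_eq_mul (hΓ h hh) (hΓ t ht)
    (by simp only [← map_mul, htmul])
  obtain ⟨hv, hw⟩ := (hΓ g hg).vectorPart_of_mul_mul_eq_mul (hΓ h hh) (hΓ t ht) htmul
  set a := linearMatrix g 0 1
  set c := linearMatrix g 1 2
  set a' := linearMatrix h 0 1
  set c' := linearMatrix h 1 2
  have hrel : ∀ f ∈ Γ, (a * c' - a' * c) * f 0 2 = linearMatrix f 0 1 * t 0 1 := by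
    intro f hf
    have hcomm : Commute (linearMatrix t) (linearMatrix f) :=
      (hΓ t ht).commute_of_mul_eq_mul (hΓ f hf) (by simp [htmat])
    simpa [htmat, hw] using (hΓ t ht).bilinear_coord_zero_of_commute (hΓ f hf)
      (commute_of_injOn_of_commute_linearMatrix hinj ht hf hcomm)
  have hd : a * c' - a' * c ≠ 0 := sub_ne_zero.2 hne
  have hv0 : t 0 1 = 0 := by
    -- With `d = a * c' - a' * c`, substituting `hrel` for `g` and `h` into `hv` gives
    -- `d * t 0 1 = -(d * t 0 1)`.
    refine (mul_eq_zero.1 ?_).resolve_left hd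
    linear_combination (1 / 2) * (a * c' - a' * c) * hv + (1 / 2) * c * hrel h hh
      - (1 / 2) * c' * hrel g hg
  obtain ⟨f, hf, hfw⟩ := exists_apply_zero_two_ne_zero hΓ hcomp
  exact mul_ne_zero hd hfw (by rw [hrel f hf, hv0, mul_zero])

lemma exists_det_ne_zero_of_commute (hΓ : ∀ γ ∈ Γ, IsUnitriangular (linearMatrix γ))
    (hcomp : HasCompactQuotient Γ) {g : AffT} (hg : g ∈ Γ) (hgw : g 0 2 ≠ 0)
    (hcomm : ∀ h ∈ Γ, Commute g h) : ∃ h ∈ Γ, h 0 1 * g 0 2 - g 0 1 * h 0 2 ≠ 0 := by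
  by_contra! hdet
  have hgc : linearMatrix g 1 2 = 0 := by
    have hsq := hdet (g * g) (Γ.mul_mem hg hg)
    simp only [AffineEquiv.coe_mul, Function.comp_apply] at hsq
    rw [(hΓ g hg).apply_coord_one (g 0), (hΓ g hg).apply_coord_two (g 0)] at hsq
    have hprod : linearMatrix g 1 2 * (g 0 2 * g 0 2) = 0 := by linear_combination hsq
    exact (mul_eq_zero.1 hprod).resolve_right (mul_ne_zero hgw hgw)
  have hc : ∀ h ∈ Γ, linearMatrix h 1 2 = 0 := by
    intro h hh
    have hrel := (hΓ g hg).bilinear_coord_one_of_commute (hΓ h hh) (hcomm h hh)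
    rw [hgc, zero_mul] at hrel
    exact (mul_eq_zero.1 hrel.symm).resolve_right hgw
  let f : E3 →ₗ[ℝ] ℝ := g 0 2 • LinearMap.proj 1 - g 0 1 • LinearMap.proj 2
  have hf : f = 0 := eq_zero_of_linearMap_invariant hcomp fun h hh x ↦ by
    simp only [f, LinearMap.sub_apply, LinearMap.smul_apply, LinearMap.proj_apply, smul_eq_mul]
    rw [(hΓ h hh).apply_coord_one x, (hΓ h hh).apply_coord_two x, hc h hh]
    linear_combination hdet h hh
  exact hgw (by simpa [f] using LinearMap.congr_fun hf (Pi.single 1 1))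

lemma exists_continuous_linearMatrix_eq (hΓ : ∀ γ ∈ Γ, IsUnitriangular (linearMatrix γ))
    (hcomp : HasCompactQuotient Γ) (hcomm : ∀ g ∈ Γ, ∀ h ∈ Γ, Commute g h) :
    ∃ F : E3 → Matrix (Fin 3) (Fin 3) ℝ, Continuous F ∧
      ∀ γ ∈ Γ, ∀ k, γ k 1 = 0 → γ k 2 = 0 → linearMatrix γ = F k := by
  obtain ⟨g, hg, hgw⟩ := exists_apply_zero_two_ne_zero hΓ hcomp
  obtain ⟨h, hh, hdet⟩ := exists_det_ne_zero_of_commute hΓ hcomp hg hgw (hcomm g hg)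
  -- `C` solves the relation with `g` for the entry `(1, 2)`; `A` and `B` solve the relations with
  -- `g` and `h` for the entries `(0, 1)` and `(0, 2)` by Cramer's rule.
  let C (k : E3) : ℝ := linearMatrix g 1 2 * -k 2 / g 0 2
  let V (k : E3) : ℝ := -k 1 - C k * k 2
  let P (f : AffT) (k : E3) : ℝ := linearMatrix f 0 1 * V k + linearMatrix f 0 2 * -k 2
  let D : ℝ := h 0 1 * g 0 2 - g 0 1 * h 0 2
  let A (k : E3) : ℝ := (P h k * g 0 2 - P g k * h 0 2) / D
  let B (k : E3) : ℝ := (P g k * h 0 1 - P h k * g 0 1) / D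
  refine ⟨fun k ↦ !![1, A k, B k; 0, 1, C k; 0, 0, 1], ?_, fun γ hγ k hk1 hk2 ↦ ?_⟩
  · have hC : Continuous C := by fun_prop
    have hA : Continuous A := by fun_prop
    have hB : Continuous B := by fun_prop
    refine continuous_matrix fun i j ↦ ?_
    fin_cases i <;> fin_cases j <;>
      first
      | exact continuous_const
      | exact hA
      | exact hB
      | exact hC
  have hw : γ 0 2 = -k 2 := by linear_combination hk2 - (hΓ γ hγ).apply_coord_two k
  have hc : linearMatrix γ 1 2 = C k := by
    rw [eq_div_iff hgw, ← hw]
    exact ((hΓ g hg).bilinear_coord_one_of_commute (hΓ γ hγ) (hcomm g hg γ hγ)).symm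
  have hv : γ 0 1 = V k := by
    rw [← sub_eq_zero]
    simp only [V, ← hc]
    linear_combination hk1 - (hΓ γ hγ).apply_coord_one k
  have hP (f : AffT) (hf : f ∈ Γ) :
      P f k = linearMatrix γ 0 1 * f 0 1 + linearMatrix γ 0 2 * f 0 2 := by
    simp only [P, ← hv, ← hw]
    exact (hΓ f hf).bilinear_coord_zero_of_commute (hΓ γ hγ) (hcomm f hf γ hγ)
  have ha : linearMatrix γ 0 1 = A k := by
    rw [eq_div_iff hdet, hP g hg, hP h hh]
    ring
  have hb : linearMatrix γ 0 2 = B k := by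
    rw [eq_div_iff hdet, hP g hg, hP h hh]
    ring
  rw [(hΓ γ hγ).eq_entries, ha, hb, hc]

lemma not_injOn_linearMatrix (hΓ : ∀ γ ∈ Γ, IsUnitriangular (linearMatrix γ))
    (hint : ∀ γ ∈ Γ, ∃ B : Matrix (Fin 3) (Fin 3) ℤ, B.map (↑) = linearMatrix γ)
    (hcomp : HasCompactQuotient Γ) : ¬ Set.InjOn linearMatrix (Γ : Set AffT) := by
  intro hinj
  obtain ⟨F, hF, hFeq⟩ := exists_continuous_linearMatrix_eq hΓ hcomp fun g hg h hh ↦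
    commute_of_injOn_of_hasCompactQuotient hΓ hcomp hinj hg hh
  obtain ⟨K, hK, hcover⟩ := exists_isCompact_forall_exists_apply_eq hcomp
  let S : Set AffT := {γ | γ ∈ Γ ∧ ∃ k ∈ K, γ k 1 = 0 ∧ γ k 2 = 0}
  have hS : S.Finite := by
    refine .of_finite_image ((finite_inter_range_map_intCast (hK.image hF)).subset ?_)
      (hinj.mono fun γ hγ ↦ hγ.1)
    rintro _ ⟨γ, ⟨hγ, k, hk, hk1, hk2⟩, rfl⟩
    exact ⟨⟨k, hk, (hFeq γ hγ k hk1 hk2).symm⟩, hint γ hγ⟩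
  have hcompact : IsCompact ((fun x : E3 ↦ x 0) '' ⋃ γ ∈ S, γ '' K) :=
    (hS.isCompact_biUnion fun γ _ ↦ hK.image
      (AffineMap.continuous_of_finiteDimensional (γ : E3 →ᵃ[ℝ] E3))).image (continuous_apply 0)
  refine noncompact_univ ℝ (hcompact.of_isClosed_subset isClosed_univ fun r _ ↦ ?_)
  obtain ⟨γ, hγ, k, hk, hγk⟩ := hcover (Pi.single 0 r)
  refine ⟨γ k, Set.mem_biUnion ⟨hγ, k, hk, ?_, ?_⟩ (Set.mem_image_of_mem γ hk), ?_⟩ <;> simp [hγk]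

end UnitriangularGroup

theorem stmt_12_general (Γ : Subgroup AffT)
    (hlin : ∀ γ ∈ Γ, ∃ (a b c : ℤ) (v : E3),
      HasForm γ !![1, (a : ℝ), (b : ℝ); 0, 1, (c : ℝ); 0, 0, 1] v)
    (hcomp : HasCompactQuotient Γ) :
    ∃ γ ∈ Γ, γ ≠ 1 ∧ ∃ v : E3, IsTranslationBy γ v := by
  have hmatrix : ∀ γ ∈ Γ, ∃ a b c : ℤ, linearMatrix γ = !![1, (a : ℝ), b; 0, 1, c; 0, 0, 1] := by
    intro γ hγ
    obtain ⟨a, b, c, _, hform⟩ := hlin γ hγ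
    exact ⟨a, b, c, linearMatrix_eq_of_forall_apply hform⟩
  have hunitriangular : ∀ γ ∈ Γ, IsUnitriangular (linearMatrix γ) := by
    intro γ hγ
    obtain ⟨a, b, c, hγ⟩ := hmatrix γ hγ
    exact hγ ▸ .of_entries ..
  have hint : ∀ γ ∈ Γ, ∃ B : Matrix (Fin 3) (Fin 3) ℤ, B.map (↑) = linearMatrix γ := by
    intro γ hγ
    obtain ⟨a, b, c, hγ⟩ := hmatrix γ hγ
    exact ⟨!![1, a, b; 0, 1, c; 0, 0, 1], by simp [hγ, ← Matrix.ext_iff, Fin.forall_fin_succ]⟩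
  have hinj := not_injOn_linearMatrix hunitriangular hint hcomp
  obtain ⟨g, hg, h, hh, hgh, hne⟩ : ∃ g ∈ Γ, ∃ h ∈ Γ, linearMatrix g = linearMatrix h ∧ g ≠ h := by
    simpa [Set.InjOn] using hinj
  exact ⟨g * h⁻¹, Γ.mul_mem hg (Γ.inv_mem hh), fun h1 ↦ hne (mul_inv_eq_one.1 h1),
    g 0 - h 0, mul_inv_apply_of_linearMatrix_eq hgh⟩

/-- a group of affine transformations of ℝ³ with integer unitriangular linear
parts, acting freely and properly discontinuously with compact quotient, contains a nontrivial
pure translation. -/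
theorem stmt_12 (Γ : Subgroup AffT)
    (hlin : ∀ γ ∈ Γ, ∃ (a b c : ℤ) (v : E3),
      HasForm γ !![1, (a : ℝ), (b : ℝ); 0, 1, (c : ℝ); 0, 0, 1] v)
    (hfree : IsFreeAction Γ) (hpd : IsProperlyDiscontinuous Γ)
    (hcomp : HasCompactQuotient Γ) :
    ∃ γ ∈ Γ, γ ≠ 1 ∧ ∃ v : E3, IsTranslationBy γ v :=
  stmt_12_general Γ hlin hcomp
end
end

section
/- Fix λ ∈ ℝ. For (s,t,u) ∈ ℝ³ let g_{s,t,u} be the affine transformation of ℝ³ with linear part [[1, λ·e^s·u, λ·e^{−s}·t],[0, e^s, 0],[0, 0, e^{−s}]] and vector part (s + λ·u·t, t, u). Then the set I_λ = {g_{s,t,u} : (s,t,u) ∈ ℝ³} is a subgroup of the group of invertible affine transformations of ℝ³ (it contains the identity and is closed under composition and inversion), and it acts freely and transitively on ℝ³: for all p, q ∈ ℝ³ there exists exactly one (s,t,u) ∈ ℝ³ with g_{s,t,u}(p) = q. -/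
/-!
The vector part of `g_{s,t,u}` is the image of the origin, and `(s,t,u) ↦ g_{s,t,u}(0)` is a
bijection onto ℝ³ because `s` can be recovered by subtracting `λ t u` from the first coordinate.
In the coordinates it provides, `g_{s,t,u}` becomes left translation by `(s,t,u)` in the
solvable group `ℝ ⋉ ℝ²`, where `s` acts on `ℝ²` by `diag(e^s, e^{-s})`, whatever `λ` is. Left
translations form a group and act simply transitively.
-/

open Matrix

noncomputable section

/-- The affine transformation `g_{s,t,u}` of the family `I_λ`. -/
def Ifam (lam s t u : ℝ) : E3 → E3 := fun x =>
  (!![1, lam * Real.exp s * u, lam * Real.exp (-s) * t;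
      0, Real.exp s, 0;
      0, 0, Real.exp (-s)]).mulVec x + ![s + lam * u * t, t, u]

theorem Ifam_apply (lam s t u : ℝ) (p : E3) :
    Ifam lam s t u p =
      ![p 0 + lam * Real.exp s * u * p 1 + lam * Real.exp (-s) * t * p 2 + (s + lam * u * t),
        Real.exp s * p 1 + t, Real.exp (-s) * p 2 + u] := by
  ext i
  fin_cases i <;> simp [Ifam, dotProduct, Fin.sum_univ_three]

/-- The three-dimensional solvable Lie group Sol, that is `ℝ ⋉ ℝ²` with `s : ℝ` acting on `ℝ²` by
`diag(e^s, e^{-s})`. It is the abstract group underlying every `I_λ`, with `(s, t, u)`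
corresponding to `g_{s,t,u}`. -/
@[ext]
structure Sol where
  s : ℝ
  t : ℝ
  u : ℝ

namespace Sol

instance : One Sol := ⟨⟨0, 0, 0⟩⟩

instance : Mul Sol :=
  ⟨fun g h => ⟨g.s + h.s, g.t + Real.exp g.s * h.t, g.u + Real.exp (-g.s) * h.u⟩⟩

instance : Inv Sol :=
  ⟨fun g => ⟨-g.s, -(Real.exp (-g.s) * g.t), -(Real.exp g.s * g.u)⟩⟩

@[simp] theorem one_s : (1 : Sol).s = 0 := rfl
@[simp] theorem one_t : (1 : Sol).t = 0 := rfl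
@[simp] theorem one_u : (1 : Sol).u = 0 := rfl

@[simp] theorem mul_s (g h : Sol) : (g * h).s = g.s + h.s := rfl
@[simp] theorem mul_t (g h : Sol) : (g * h).t = g.t + Real.exp g.s * h.t := rfl
@[simp] theorem mul_u (g h : Sol) : (g * h).u = g.u + Real.exp (-g.s) * h.u := rfl

@[simp] theorem inv_s (g : Sol) : g⁻¹.s = -g.s := rfl
@[simp] theorem inv_t (g : Sol) : g⁻¹.t = -(Real.exp (-g.s) * g.t) := rfl
@[simp] theorem inv_u (g : Sol) : g⁻¹.u = -(Real.exp g.s * g.u) := rfl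

instance : Group Sol :=
  Group.ofLeftAxioms
    (fun g h k => by
      ext <;> simp only [mul_s, mul_t, mul_u, neg_add, Real.exp_add] <;> ring)
    (fun g => by ext <;> simp)
    (fun g => by ext <;> simp)

/-- Triples of reals as elements of Sol. -/
def ofTriple : ℝ × ℝ × ℝ ≃ Sol where
  toFun p := ⟨p.1, p.2.1, p.2.2⟩
  invFun g := (g.s, g.t, g.u)

/-- The orbit map `g ↦ g(0)` of the origin under the action of Sol on ℝ³ as `I_λ`. -/
def orbitMap (lam : ℝ) : Sol ≃ E3 where
  toFun g := ![g.s + lam * g.u * g.t, g.t, g.u]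
  invFun p := ⟨p 0 - lam * p 2 * p 1, p 1, p 2⟩
  left_inv g := by ext <;> simp
  right_inv p := by ext i; fin_cases i <;> simp

theorem orbitMap_apply (lam : ℝ) (g : Sol) :
    orbitMap lam g = ![g.s + lam * g.u * g.t, g.t, g.u] :=
  rfl

theorem Ifam_orbitMap (lam : ℝ) (g h : Sol) :
    Ifam lam g.s g.t g.u (orbitMap lam h) = orbitMap lam (g * h) := by
  have exp_mul_exp_neg : Real.exp g.s * Real.exp (-g.s) = 1 := by
    rw [← Real.exp_add, add_neg_cancel, Real.exp_zero]
  rw [Ifam_apply]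
  simp only [orbitMap_apply, cons_val, mul_s, mul_t, mul_u, vecCons_inj, and_true]
  refine ⟨?_, add_comm _ _, add_comm _ _⟩
  linear_combination (-lam * h.t * h.u) * exp_mul_exp_neg

theorem Ifam_eq_orbitMap (lam : ℝ) (g : Sol) (p : E3) :
    Ifam lam g.s g.t g.u p = orbitMap lam (g * (orbitMap lam).symm p) := by
  rw [← Ifam_orbitMap, Equiv.apply_symm_apply]

theorem bijective_Ifam_apply (lam : ℝ) (p : E3) :
    Function.Bijective fun g : Sol => Ifam lam g.s g.t g.u p := by
  simp only [Ifam_eq_orbitMap]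
  exact ((Equiv.mulRight ((orbitMap lam).symm p)).trans (orbitMap lam)).bijective

/-- The transformation `g_{s,t,u}` as a morphism of affine spaces. -/
def toAffineMap (lam : ℝ) (g : Sol) : E3 →ᵃ[ℝ] E3 where
  toFun := Ifam lam g.s g.t g.u
  linear := Matrix.mulVecLin
    !![1, lam * Real.exp g.s * g.u, lam * Real.exp (-g.s) * g.t;
      0, Real.exp g.s, 0;
      0, 0, Real.exp (-g.s)]
  map_vadd' p v := by
    simp only [Ifam, vadd_eq_add, mulVec_add, mulVecLin_apply, add_assoc]

theorem toAffineMap_apply (lam : ℝ) (g : Sol) (p : E3) :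
    toAffineMap lam g p = Ifam lam g.s g.t g.u p :=
  rfl

theorem toAffineMap_one (lam : ℝ) : toAffineMap lam 1 = 1 := by
  refine AffineMap.ext fun p => ?_
  rw [toAffineMap_apply, Ifam_eq_orbitMap, one_mul, Equiv.apply_symm_apply, AffineMap.coe_one,
    id_eq]

theorem toAffineMap_mul (lam : ℝ) (g h : Sol) :
    toAffineMap lam (g * h) = toAffineMap lam g * toAffineMap lam h := by
  refine AffineMap.ext fun p => ?_
  rw [AffineMap.coe_mul, Function.comp_apply]
  simp only [toAffineMap_apply, Ifam_eq_orbitMap, Equiv.symm_apply_apply, mul_assoc]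

/-- The affine action of Sol on ℝ³ whose image is `I_λ`. -/
def affineAction (lam : ℝ) : Sol →* AffT :=
  AffineEquiv.equivUnitsAffineMap.symm.toMonoidHom.comp <| MonoidHom.toHomUnits
    { toFun := toAffineMap lam
      map_one' := toAffineMap_one lam
      map_mul' := toAffineMap_mul lam }

theorem affineAction_apply (lam : ℝ) (g : Sol) (p : E3) :
    affineAction lam g p = Ifam lam g.s g.t g.u p :=
  rfl

theorem coe_range_affineAction (lam : ℝ) :
    ((affineAction lam).range : Set AffT) =
      {γ | ∃ s t u : ℝ, ∀ p, γ p = Ifam lam s t u p} := by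
  ext γ
  constructor
  · rintro ⟨g, rfl⟩
    exact ⟨g.s, g.t, g.u, affineAction_apply lam g⟩
  · rintro ⟨s, t, u, hγ⟩
    exact ⟨⟨s, t, u⟩, AffineEquiv.ext fun p => (hγ p).symm⟩

end Sol

/-- the family `I_λ` is a subgroup of the invertible affine transformations of ℝ³
and acts freely and transitively on ℝ³. -/
theorem stmt_15 (lam : ℝ) (S : Set AffT)
    (hS : S = {γ : AffT | ∃ s t u : ℝ, ∀ x, γ x = Ifam lam s t u x}) :
    (∀ s t u : ℝ, ∃ γ : AffT, ∀ x, γ x = Ifam lam s t u x) ∧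
    (1 : AffT) ∈ S ∧
    (∀ γ₁ ∈ S, ∀ γ₂ ∈ S, γ₁ * γ₂ ∈ S) ∧
    (∀ γ ∈ S, γ⁻¹ ∈ S) ∧
    (∀ p q : E3, ∃! stu : ℝ × ℝ × ℝ, Ifam lam stu.1 stu.2.1 stu.2.2 p = q) := by
  rw [← Sol.coe_range_affineAction] at hS
  subst hS
  refine ⟨fun s t u => ⟨Sol.affineAction lam ⟨s, t, u⟩, Sol.affineAction_apply lam _⟩,
    one_mem (Sol.affineAction lam).range, fun _ h₁ _ h₂ => mul_mem h₁ h₂,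
    fun _ h => inv_mem h, fun p q => ?_⟩
  exact ((Sol.bijective_Ifam_apply lam p).comp Sol.ofTriple.bijective).existsUnique q
end
end
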